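/- arXiv:2104.12960 — 3 statements merged into one kernel-verified Lean document; each statement's English description precedes it below -/
import Mathlib

section
/- Assume conditions (A) and (B). Then the pointwise limit u of the sequence U_k has the representation u(z) = a(g(z) − z) for all z ∈ [0,1], where a > 0 is a constant and g is the probability generating function of a probability distribution (p_j)_{j∈ℕ} on ℕ with finite mean Σ_j j·p_j < ∞ (equivalently g'(1−) < ∞). -/
/-!
Let `M > 0` bound the Lipschitz constants of the `U_k`. The perturbed identity `z + U_k(z) / M` is
again the generating function of a probability distribution: only its coefficient of `z` could be
negative, and comparing slopes at `0` shows that the Lipschitz bound prevents this. By the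
continuity theorem for generating functions, the limit `z + u(z) / M` is then a generating function
`g`, which means `u(z) = M (g(z) - z)`. As a limit of uniformly Lipschitz functions, `g` is
Lipschitz on `[0, 1]`, so its distribution has finite mean.
-/

open Filter Set

/-- The probability generating function of a distribution `p` on `ℕ`. -/
noncomputable def pgf (p : ℕ → ℝ) (z : ℝ) : ℝ := ∑' j, p j * z ^ j

open scoped Topology NNReal

lemma lipschitzOnWith_of_tendsto {ι α β : Type*} [PseudoEMetricSpace α] [PseudoEMetricSpace β]
    {l : Filter ι} [l.NeBot] {F : ι → α → β} {f : α → β} {s : Set α} {K : ℝ≥0}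
    (hF : ∀ i, LipschitzOnWith K (F i) s)
    (hlim : ∀ x ∈ s, Tendsto (fun i => F i x) l (𝓝 (f x))) : LipschitzOnWith K f s :=
  fun x hx y hy => le_of_tendsto' ((hlim x hx).edist (hlim y hy)) fun i => hF i hx hy

lemma exists_ultrafilter_le_tendsto_apply {ι κ X : Type*} [TopologicalSpace X] {l : Filter ι}
    [l.NeBot] {p : ι → κ → X} {s : κ → Set X} (hs : ∀ j, IsCompact (s j))
    (hp : ∀ i j, p i j ∈ s j) :
    ∃ (𝒰 : Ultrafilter ι) (q : κ → X), ↑𝒰 ≤ l ∧ ∀ j, Tendsto (fun i => p i j) 𝒰 (𝓝 (q j)) := by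
  obtain ⟨q, -, hq⟩ := (isCompact_univ_pi hs).ultrafilter_le_nhds' ((Ultrafilter.of l).map p)
    (Ultrafilter.mem_map.2 (Eventually.of_forall fun i j _ => hp i j))
  exact ⟨Ultrafilter.of l, q, Ultrafilter.of_le l, tendsto_pi_nhds.1 hq⟩

lemma summable_of_tendsto_apply {ι κ : Type*} {l : Filter ι} [l.NeBot] {p : ι → κ → ℝ}
    {q : κ → ℝ} {C : ℝ} (hp_nonneg : ∀ i j, 0 ≤ p i j)
    (hp_sum : ∀ i (s : Finset κ), ∑ j ∈ s, p i j ≤ C)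
    (hq : ∀ j, Tendsto (fun i => p i j) l (𝓝 (q j))) : Summable q :=
  summable_of_sum_le (fun j => ge_of_tendsto' (hq j) fun i => hp_nonneg i j) fun s =>
    le_of_tendsto' (tendsto_finsetSum s fun j _ => hq j) fun i => hp_sum i s

section PGF

variable {p : ℕ → ℝ} {z : ℝ}

lemma norm_mul_pow_le (c : ℝ) (hz : z ∈ Icc (-1 : ℝ) 1) (j : ℕ) : ‖c * z ^ j‖ ≤ ‖c‖ := by
  rw [norm_mul, norm_pow]
  exact mul_le_of_le_one_right (norm_nonneg c) (pow_le_one₀ (norm_nonneg z) (abs_le.2 hz))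

lemma hasSum_pgf (hp : Summable p) (hz : z ∈ Icc (-1 : ℝ) 1) :
    HasSum (fun j => p j * z ^ j) (pgf p z) :=
  (hp.norm.of_norm_bounded fun j => norm_mul_pow_le (p j) hz j).hasSum

lemma continuousOn_pgf (hp : Summable p) : ContinuousOn (pgf p) (Icc (-1) 1) :=
  continuousOn_tsum (fun j => by fun_prop) hp.norm fun j _ hz => norm_mul_pow_le (p j) hz j

lemma Icc_zero_one_subset_Icc_neg_one_one : Icc (0 : ℝ) 1 ⊆ Icc (-1) 1 :=
  Icc_subset_Icc_left (by norm_num)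

lemma pgf_eq_add_mul_pgf_succ (hp : Summable p) (hz : z ∈ Icc (-1 : ℝ) 1) :
    pgf p z = p 0 + z * pgf (fun j => p (j + 1)) z := by
  rw [pgf, (hasSum_pgf hp hz).summable.tsum_eq_zero_add, pgf, ← tsum_mul_left]
  congr 1
  · simp
  · exact tsum_congr fun j => by ring

lemma pgf_zero (p : ℕ → ℝ) : pgf p 0 = p 0 := by
  rw [pgf, tsum_eq_single 0 fun j hj => by simp [hj]]
  simp

lemma pgf_one (p : ℕ → ℝ) : pgf p 1 = ∑' j, p j := by
  simp only [pgf, one_pow, mul_one]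

lemma mul_one_sub_apply_one_le_of_lipschitzOnWith {c : ℝ} {K : ℝ≥0} (hp : Summable p)
    (hLip : LipschitzOnWith K (fun z => c * (pgf p z - z)) (Icc 0 1)) :
    c * (1 - p 1) ≤ K := by
  have hsucc : Summable fun j => p (j + 1) := (summable_nat_add_iff 1).2 hp
  have slope_le : ∀ z ∈ Ioo (0 : ℝ) 1, c * (1 - pgf (fun j => p (j + 1)) z) ≤ K := by
    intro z hz
    have hz' := Ioo_subset_Icc_self hz
    have hdist := hLip.dist_le_mul 0 (left_mem_Icc.2 zero_le_one) z hz'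
    rw [Real.dist_eq, dist_zero_left, Real.norm_of_nonneg hz.1.le, pgf_zero,
      pgf_eq_add_mul_pgf_succ hp (Icc_zero_one_subset_Icc_neg_one_one hz')] at hdist
    refine le_of_mul_le_mul_right ?_ hz.1
    linear_combination (le_abs_self _).trans hdist
  have hcont : ContinuousOn (fun z => c * (1 - pgf (fun j => p (j + 1)) z)) (Icc (-1) 1) :=
    continuousOn_const.mul (continuousOn_const.sub (continuousOn_pgf hsucc))
  have hle := ContinuousWithinAt.closure_le
    (by simp [closure_Ioo (zero_ne_one' ℝ)] : (0 : ℝ) ∈ closure (Ioo 0 1))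
    ((hcont 0 (by simp)).mono (Ioo_subset_Icc_self.trans Icc_zero_one_subset_Icc_neg_one_one))
    continuousWithinAt_const slope_le
  simpa [pgf_zero] using hle

lemma sum_mul_geom_sum_mul_one_sub_le (hp_nonneg : ∀ j, 0 ≤ p j) (hp : Summable p)
    (hz : z ∈ Icc (0 : ℝ) 1) (s : Finset ℕ) :
    (∑ j ∈ s, p j * ∑ i ∈ Finset.range j, z ^ i) * (1 - z) ≤ pgf p 1 - pgf p z := by
  have hdiff : HasSum (fun j => p j - p j * z ^ j) (pgf p 1 - pgf p z) := by
    rw [pgf_one]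
    exact hp.hasSum.sub (hasSum_pgf hp (Icc_zero_one_subset_Icc_neg_one_one hz))
  calc (∑ j ∈ s, p j * ∑ i ∈ Finset.range j, z ^ i) * (1 - z)
      = ∑ j ∈ s, (p j - p j * z ^ j) := by
        rw [Finset.sum_mul]
        exact Finset.sum_congr rfl fun j _ => by rw [mul_assoc, geom_sum_mul_neg, mul_one_sub]
    _ ≤ pgf p 1 - pgf p z := sum_le_hasSum s (fun j _ => sub_nonneg.2
        (mul_le_of_le_one_right (hp_nonneg j) (pow_le_one₀ hz.1 hz.2))) hdiff

lemma summable_natCast_mul_of_lipschitzOnWith_pgf {K : ℝ≥0} (hp_nonneg : ∀ j, 0 ≤ p j)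
    (hp : Summable p) (hLip : LipschitzOnWith K (pgf p) (Icc 0 1)) :
    Summable fun j : ℕ => (j : ℝ) * p j := by
  refine summable_of_sum_le (c := (K : ℝ))
    (fun j => mul_nonneg j.cast_nonneg (hp_nonneg j)) fun s => ?_
  have slope_le : ∀ z ∈ Ioo (0 : ℝ) 1, ∑ j ∈ s, p j * ∑ i ∈ Finset.range j, z ^ i ≤ K := by
    intro z hz
    have hz' := Ioo_subset_Icc_self hz
    have hdist := hLip.dist_le_mul 1 (right_mem_Icc.2 zero_le_one) z hz'
    rw [Real.dist_eq, Real.dist_eq, abs_of_pos (sub_pos.2 hz.2)] at hdist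
    exact le_of_mul_le_mul_right ((sum_mul_geom_sum_mul_one_sub_le hp_nonneg hp hz' s).trans
      ((le_abs_self _).trans hdist)) (sub_pos.2 hz.2)
  have hle := ContinuousWithinAt.closure_le
    (by simp [closure_Ioo (zero_ne_one' ℝ)] : (1 : ℝ) ∈ closure (Ioo 0 1))
    (Continuous.continuousWithinAt (by fun_prop)) continuousWithinAt_const slope_le
  simpa [mul_comm] using hle

end PGF

section ContinuityTheorem

variable {ι : Type*} {l : Filter ι} {p : ι → ℕ → ℝ} {q : ℕ → ℝ}

lemma tendsto_pgf_of_tendsto_apply {C z : ℝ} (hbound : ∀ i j, ‖p i j‖ ≤ C) (hz : ‖z‖ < 1)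
    (hq : ∀ j, Tendsto (fun i => p i j) l (𝓝 (q j))) :
    Tendsto (fun i => pgf (p i) z) l (𝓝 (pgf q z)) := by
  refine tendsto_tsum_of_dominated_convergence (bound := fun j => C * ‖z‖ ^ j)
    ((summable_geometric_of_lt_one (norm_nonneg z) hz).mul_left C)
    (fun j => (hq j).mul_const _) (Eventually.of_forall fun i j => ?_)
  rw [norm_mul, norm_pow]
  exact mul_le_mul_of_nonneg_right (hbound i j) (pow_nonneg (norm_nonneg z) j)

/-- Continuity of `f` at `1` excludes loss of mass at infinity: a coordinatewise limit of the `p i`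
has generating function `f` on `[0, 1)`, and its total mass is the limit of `f` at `1`. -/
lemma exists_eqOn_pgf_of_tendsto [l.NeBot] {f : ℝ → ℝ} (hp_nonneg : ∀ i j, 0 ≤ p i j)
    (hp_sum : ∀ i, HasSum (p i) 1)
    (hlim : ∀ z ∈ Icc (0 : ℝ) 1, Tendsto (fun i => pgf (p i) z) l (𝓝 (f z)))
    (hf : ContinuousOn f (Icc 0 1)) :
    ∃ q : ℕ → ℝ, (∀ j, 0 ≤ q j) ∧ HasSum q 1 ∧ EqOn f (pgf q) (Icc 0 1) := by
  have hp_le_one : ∀ i j, p i j ≤ 1 := fun i j => le_hasSum (hp_sum i) j fun k _ => hp_nonneg i k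
  obtain ⟨𝒰, q, h𝒰, hq⟩ := exists_ultrafilter_le_tendsto_apply (l := l)
    (fun _ => isCompact_Icc) fun i j => ⟨hp_nonneg i j, hp_le_one i j⟩
  have hq_summable : Summable q := summable_of_tendsto_apply hp_nonneg
    (fun i s => sum_le_hasSum s (fun j _ => hp_nonneg i j) (hp_sum i)) hq
  have heq_Ico : EqOn f (pgf q) (Ico 0 1) := fun z hz =>
    tendsto_nhds_unique ((hlim z (Ico_subset_Icc_self hz)).mono_left h𝒰)
      (tendsto_pgf_of_tendsto_apply
        (fun i j => (Real.norm_of_nonneg (hp_nonneg i j)).trans_le (hp_le_one i j))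
        ((Real.norm_of_nonneg hz.1).trans_lt hz.2) hq)
  have heq_Icc : EqOn f (pgf q) (Icc 0 1) :=
    heq_Ico.of_subset_closure hf
      ((continuousOn_pgf hq_summable).mono Icc_zero_one_subset_Icc_neg_one_one)
      Ico_subset_Icc_self (closure_Ico (zero_ne_one' ℝ)).superset
  have hf_one : f 1 = 1 := by
    refine tendsto_nhds_unique (hlim 1 (right_mem_Icc.2 zero_le_one)) ?_
    simp only [pgf_one, (hp_sum _).tsum_eq, tendsto_const_nhds]
  have hq_tsum : ∑' j, q j = 1 := by
    rw [← pgf_one, ← heq_Icc (right_mem_Icc.2 zero_le_one), hf_one]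
  exact ⟨q, fun j => ge_of_tendsto' (hq j) fun i => hp_nonneg i j,
    hq_tsum ▸ hq_summable.hasSum, heq_Icc⟩

end ContinuityTheorem

/-- The affine combination `c p + (1 - c) δ₁` of a distribution `p` with the unit mass at `1`, whose
generating function is the perturbation `z + c (g(z) - z)` of the identity. The factor `c` may
exceed `1`, in which case the weight at `1` need not be nonnegative. -/
noncomputable def mixDiracOne (c : ℝ) (p : ℕ → ℝ) (j : ℕ) : ℝ :=
  c * p j + (1 - c) * (Pi.single 1 1 : ℕ → ℝ) j

section MixDiracOne

variable {c : ℝ} {p : ℕ → ℝ}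

lemma mixDiracOne_nonneg (hc : 0 ≤ c) (hp_nonneg : ∀ j, 0 ≤ p j) (hc_le : c * (1 - p 1) ≤ 1)
    (j : ℕ) : 0 ≤ mixDiracOne c p j := by
  rcases eq_or_ne j 1 with rfl | hj
  · simp only [mixDiracOne, Pi.single_eq_same]
    linarith
  · simpa [mixDiracOne, hj] using mul_nonneg hc (hp_nonneg j)

lemma hasSum_mixDiracOne {m : ℝ} (hp : HasSum p m) :
    HasSum (mixDiracOne c p) (c * m + (1 - c)) := by
  have hdirac : HasSum (Pi.single 1 1 : ℕ → ℝ) 1 := hasSum_pi_single 1 1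
  simpa only [mul_one] using! (hp.mul_left c).add (hdirac.mul_left (1 - c))

lemma pgf_mixDiracOne (hp : Summable p) {z : ℝ} (hz : z ∈ Icc (-1 : ℝ) 1) :
    pgf (mixDiracOne c p) z = z + c * (pgf p z - z) := by
  have hdirac : HasSum (fun j => (Pi.single 1 1 : ℕ → ℝ) j * z ^ j) z := by
    convert hasSum_single 1 fun j hj => ?_ <;> simp [*]
  convert (((hasSum_pgf hp hz).mul_left c).add (hdirac.mul_left (1 - c))).tsum_eq using 1
  · exact tsum_congr fun j => by rw [mixDiracOne]; ring
  · ring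

end MixDiracOne

lemma exists_eqOn_pgf_sub_id_of_lipschitzOnWith_one {ι : Type*} {l : Filter ι} [l.NeBot]
    {p : ι → ℕ → ℝ} {c : ι → ℝ} {v : ℝ → ℝ}
    (hp_nonneg : ∀ i j, 0 ≤ p i j) (hp_sum : ∀ i, HasSum (p i) 1) (hc : ∀ i, 0 ≤ c i)
    (hLip : ∀ i, LipschitzOnWith 1 (fun z => c i * (pgf (p i) z - z)) (Icc 0 1))
    (hlim : ∀ z ∈ Icc (0 : ℝ) 1, Tendsto (fun i => c i * (pgf (p i) z - z)) l (𝓝 (v z))) :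
    ∃ q : ℕ → ℝ, (∀ j, 0 ≤ q j) ∧ HasSum q 1 ∧ Summable (fun j : ℕ => (j : ℝ) * q j) ∧
      EqOn v (fun z => pgf q z - z) (Icc 0 1) := by
  have hmix_nonneg : ∀ i j, 0 ≤ mixDiracOne (c i) (p i) j := fun i =>
    mixDiracOne_nonneg (hc i) (hp_nonneg i)
      (mul_one_sub_apply_one_le_of_lipschitzOnWith (hp_sum i).summable (hLip i))
  have hmix_sum : ∀ i, HasSum (mixDiracOne (c i) (p i)) 1 := fun i => by
    simpa using hasSum_mixDiracOne (c := c i) (hp_sum i)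
  have hmix_lim : ∀ z ∈ Icc (0 : ℝ) 1,
      Tendsto (fun i => pgf (mixDiracOne (c i) (p i)) z) l (𝓝 (z + v z)) := fun z hz => by
    simpa only [pgf_mixDiracOne (hp_sum _).summable (Icc_zero_one_subset_Icc_neg_one_one hz)]
      using (hlim z hz).const_add z
  have hlim_lip : LipschitzOnWith (1 + 1) (fun z => z + v z) (Icc 0 1) :=
    LipschitzWith.id.lipschitzOnWith.add (lipschitzOnWith_of_tendsto hLip hlim)
  obtain ⟨q, hq_nonneg, hq_sum, hq⟩ :=
    exists_eqOn_pgf_of_tendsto hmix_nonneg hmix_sum hmix_lim hlim_lip.continuousOn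
  have hq_lip : LipschitzOnWith (1 + 1) (pgf q) (Icc 0 1) := fun x hx y hy => by
    rw [← hq hx, ← hq hy]
    exact hlim_lip hx hy
  exact ⟨q, hq_nonneg, hq_sum,
    summable_natCast_mul_of_lipschitzOnWith_pgf hq_nonneg hq_sum.summable hq_lip,
    fun z hz => eq_sub_of_add_eq' (hq hz)⟩

theorem limit_representation_one_type_general {ι : Type*} {l : Filter ι} [l.NeBot]
    {p : ι → ℕ → ℝ} {γ : ι → ℝ} {u : ℝ → ℝ}
    (hp_nonneg : ∀ i j, 0 ≤ p i j) (hp_sum : ∀ i, HasSum (p i) 1) (hγ : ∀ i, 0 ≤ γ i)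
    (hLip : ∃ L : ℝ≥0, ∀ i, LipschitzOnWith L (fun z => γ i * (pgf (p i) z - z)) (Icc 0 1))
    (hconv : ∀ z ∈ Icc (0 : ℝ) 1,
      Tendsto (fun i => γ i * (pgf (p i) z - z)) l (𝓝 (u z))) :
    ∃ (a : ℝ) (q : ℕ → ℝ), 0 < a ∧ (∀ j, 0 ≤ q j) ∧ HasSum q 1 ∧
      Summable (fun j : ℕ => (j : ℝ) * q j) ∧
      ∀ z ∈ Icc (0 : ℝ) 1, u z = a * (pgf q z - z) := by
  obtain ⟨L, hL⟩ := hLip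
  obtain ⟨M, hLM, hM_pos⟩ : ∃ M : ℝ≥0, L ≤ M ∧ 0 < M := ⟨L + 1, by simp, by positivity⟩
  have hscaled_lip : ∀ i, LipschitzOnWith 1
      (fun z => (M : ℝ)⁻¹ * γ i * (pgf (p i) z - z)) (Icc 0 1) := fun i => by
    have hscale : LipschitzWith M⁻¹ fun x : ℝ => (M : ℝ)⁻¹ * x := by
      simpa using lipschitzWith_smul (M : ℝ)⁻¹ (β := ℝ)
    simpa only [Function.comp_def, mul_assoc] using
      (hscale.comp_lipschitzOnWith (hL i)).weaken (inv_mul_le_one_of_le₀ hLM zero_le)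
  have hscaled_lim : ∀ z ∈ Icc (0 : ℝ) 1,
      Tendsto (fun i => (M : ℝ)⁻¹ * γ i * (pgf (p i) z - z)) l (𝓝 ((M : ℝ)⁻¹ * u z)) :=
    fun z hz => by simpa only [mul_assoc] using (hconv z hz).const_mul (M : ℝ)⁻¹
  obtain ⟨q, hq_nonneg, hq_sum, hq_mean, hq⟩ := exists_eqOn_pgf_sub_id_of_lipschitzOnWith_one
    hp_nonneg hp_sum (fun i => mul_nonneg (by positivity) (hγ i)) hscaled_lip hscaled_lim
  exact ⟨M, q, hM_pos, hq_nonneg, hq_sum, hq_mean, fun z hz =>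
    (inv_mul_eq_iff_eq_mul₀ (by positivity)).1 (hq hz)⟩

/-- Under conditions (A) and (B), the pointwise limit `u` of the
functions `U_k(z) = γ_k (g_k(z) - z)` has the representation `u(z) = a (g(z) - z)`
for a constant `a > 0` and the generating function `g` of a probability distribution
on `ℕ` with finite mean. -/
theorem limit_representation_one_type
    (p : ℕ → ℕ → ℝ) (γ : ℕ → ℝ) (u : ℝ → ℝ)
    (hp_nonneg : ∀ k j, 0 ≤ p k j)
    (hp_sum : ∀ k, HasSum (p k) 1)
    (hγ_pos : ∀ k, 0 < γ k)
    -- Condition (A)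
    (hA : Tendsto γ atTop atTop)
    -- Condition (B): uniform Lipschitz on [0,1] …
    (hLip : ∃ L : NNReal, ∀ k,
      LipschitzOnWith L (fun z => γ k * (pgf (p k) z - z)) (Icc (0:ℝ) 1))
    -- … and pointwise convergence to a continuous function u
    (hu_cont : ContinuousOn u (Icc (0:ℝ) 1))
    (hconv : ∀ z ∈ Icc (0:ℝ) 1,
      Tendsto (fun k => γ k * (pgf (p k) z - z)) atTop (nhds (u z))) :
    ∃ (a : ℝ) (q : ℕ → ℝ), 0 < a ∧ (∀ j, 0 ≤ q j) ∧ HasSum q 1 ∧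
      Summable (fun j : ℕ => (j : ℝ) * q j) ∧
      ∀ z ∈ Icc (0:ℝ) 1, u z = a * (pgf q z - z) :=
  limit_representation_one_type_general hp_nonneg hp_sum (fun k => (hγ_pos k).le) hLip hconv
end

section
/- For any a > 0 and any probability distribution (p_j)_{j∈ℕ} on ℕ with finite mean Σ_j j·p_j < ∞ and generating function g, setting u(z) = a(g(z) − z), there exist positive reals (γ_k)_{k≥1} with γ_k → ∞ and probability generating functions (g_k)_{k≥1} such that the functions U_k(z) = γ_k(g_k(z) − z) are uniformly Lipschitz on [0,1] and converge to u(z) for every z ∈ [0,1]; i.e., conditions (A) and (B) hold with limit u. -/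
open Filter Set

/-! Mixing an offspring law with the law of exactly one child multiplies `g(z) - z` by the mixing
weight. With weight `1 / (k + 1)` and `γ_k = a (k + 1)` the two factors cancel, so every `U_k`
equals `u` on `[0,1]`, and `u` is Lipschitz there because the offspring mean is finite. -/

theorem lipschitzOnWith_pow_Icc_neg_one_one (n : ℕ) :
    LipschitzOnWith n (fun x : ℝ => x ^ n) (Icc (-1) 1) := by
  refine LipschitzOnWith.of_dist_le_mul fun x hx y hy => ?_
  have hmax : max |x| |y| ≤ 1 := max_le (abs_le.2 hx) (abs_le.2 hy)
  calc |x ^ n - y ^ n| ≤ |x - y| * n * max |x| |y| ^ (n - 1) := abs_pow_sub_pow_le x y n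
    _ ≤ |x - y| * n * 1 := by gcongr; exact pow_le_one₀ (by positivity) hmax
    _ = n * |x - y| := by ring

section Pgf

variable {q : ℕ → ℝ} {z : ℝ}

theorem summable_mul_pow_of_abs_le_one (hq : Summable q) (hz : |z| ≤ 1) :
    Summable fun j => q j * z ^ j := by
  refine Summable.of_norm_bounded hq.abs fun j => ?_
  rw [Real.norm_eq_abs, abs_mul, abs_pow]
  exact mul_le_of_le_one_right (abs_nonneg _) (pow_le_one₀ (abs_nonneg _) hz)

theorem summable_of_summable_natCast_mul (hq : Summable fun j : ℕ => (j : ℝ) * q j) :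
    Summable q := by
  refine Summable.of_norm_bounded_eventually_nat hq.abs ?_
  filter_upwards [eventually_ge_atTop 1] with j hj
  rw [Real.norm_eq_abs, abs_mul, Nat.abs_cast]
  exact le_mul_of_one_le_left (abs_nonneg _) (mod_cast hj)

theorem lipschitzOnWith_pgf (hq : Summable fun j : ℕ => (j : ℝ) * q j) :
    LipschitzOnWith (∑' j : ℕ, j * ‖q j‖₊) (pgf q) (Icc (-1) 1) := by
  refine LipschitzOnWith.of_dist_le_mul fun x hx y hy => ?_
  have summable_at : ∀ t ∈ Icc (-1 : ℝ) 1, Summable fun j => q j * t ^ j := fun t ht =>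
    summable_mul_pow_of_abs_le_one (summable_of_summable_natCast_mul hq) (abs_le.2 ht)
  have hmean : Summable fun j : ℕ => (j : ℝ) * |q j| := by
    simpa only [abs_mul, Nat.abs_cast] using hq.abs
  have term_le (j : ℕ) : ‖q j * x ^ j - q j * y ^ j‖ ≤ j * |q j| * dist x y := by
    calc ‖q j * x ^ j - q j * y ^ j‖ = |q j| * dist (x ^ j) (y ^ j) := by
          rw [← mul_sub, norm_mul, Real.norm_eq_abs, dist_eq_norm]
      _ ≤ |q j| * (j * dist x y) := by
          gcongr
          exact (lipschitzOnWith_pow_Icc_neg_one_one j).dist_le_mul x hx y hy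
      _ = j * |q j| * dist x y := by ring
  calc dist (pgf q x) (pgf q y) = ‖∑' j, (q j * x ^ j - q j * y ^ j)‖ := by
        rw [dist_eq_norm, pgf, pgf, (summable_at x hx).tsum_sub (summable_at y hy)]
    _ ≤ (∑' j : ℕ, (j : ℝ) * |q j|) * dist x y :=
        tsum_of_norm_bounded (hmean.hasSum.mul_right _) term_le
    _ = (∑' j : ℕ, j * ‖q j‖₊ : NNReal) * dist x y := by
        push_cast
        rfl

theorem lipschitzOnWith_const_mul_pgf_sub_self (a : ℝ)
    (hq : Summable fun j : ℕ => (j : ℝ) * q j) :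
    LipschitzOnWith (‖a‖₊ * (∑' j : ℕ, j * ‖q j‖₊ + 1)) (fun z => a * (pgf q z - z))
      (Icc (-1) 1) :=
  (lipschitzWith_smul a).comp_lipschitzOnWith
    ((lipschitzOnWith_pgf hq).sub LipschitzWith.id.lipschitzOnWith)

end Pgf

/-- The offspring law that follows `q` with probability `ε` and otherwise gives exactly one child.
The weight `ε` is an arbitrary real; probability laws are preserved when `0 ≤ ε ≤ 1`. -/
noncomputable def lazyOffspring (ε : ℝ) (q : ℕ → ℝ) : ℕ → ℝ :=
  ε • q + (1 - ε) • Pi.single 1 1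

section LazyOffspring

variable {q : ℕ → ℝ}

theorem lazyOffspring_nonneg {ε : ℝ} (hε₀ : 0 ≤ ε) (hε₁ : ε ≤ 1) (hq : 0 ≤ q) :
    0 ≤ lazyOffspring ε q :=
  add_nonneg (smul_nonneg hε₀ hq)
    (smul_nonneg (sub_nonneg.2 hε₁) (Pi.single_nonneg.2 zero_le_one))

theorem hasSum_lazyOffspring (ε : ℝ) (hq : HasSum q 1) : HasSum (lazyOffspring ε q) 1 := by
  simpa using! (hq.const_smul ε).add ((hasSum_pi_single 1 (1 : ℝ)).const_smul (1 - ε))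

theorem pgf_lazyOffspring_sub_self {z : ℝ} (ε : ℝ) (hz : Summable fun j => q j * z ^ j) :
    pgf (lazyOffspring ε q) z - z = ε * (pgf q z - z) := by
  have hsingle : HasSum (fun j => (Pi.single 1 1 : ℕ → ℝ) j * z ^ j) z := by
    simpa using hasSum_single (f := fun j => (Pi.single 1 1 : ℕ → ℝ) j * z ^ j) 1
      fun j hj => by simp [hj]
  have hpgf : HasSum (fun j => lazyOffspring ε q j * z ^ j) (ε * pgf q z + (1 - ε) * z) := by
    refine ((hz.hasSum.mul_left ε).add (hsingle.mul_left (1 - ε))).congr_fun fun j => ?_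
    simp only [lazyOffspring, Pi.add_apply, Pi.smul_apply, smul_eq_mul]
    ring
  rw [pgf, hpgf.tsum_eq]
  ring

theorem mul_pgf_lazyOffspring_inv_sub_self {t z : ℝ} (a : ℝ) (ht : t ≠ 0)
    (hz : Summable fun j => q j * z ^ j) :
    a * t * (pgf (lazyOffspring t⁻¹ q) z - z) = a * (pgf q z - z) := by
  rw [pgf_lazyOffspring_sub_self _ hz]
  field_simp

end LazyOffspring

/-- For any `a > 0` and any probability distribution `q` on `ℕ` with
finite mean, setting `u(z) = a (g(z) - z)` where `g` is the generating function of `q`,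
there exist `γ_k → ∞` and probability generating functions `g_k` such that
`U_k(z) = γ_k (g_k(z) - z)` are uniformly Lipschitz on `[0,1]` and converge to `u`
pointwise on `[0,1]`; i.e. conditions (A) and (B) hold with limit `u`. -/
theorem existence_of_approximating_sequence_one_type
    (a : ℝ) (ha : 0 < a) (q : ℕ → ℝ)
    (hq_nonneg : ∀ j, 0 ≤ q j) (hq_sum : HasSum q 1)
    (hq_mean : Summable (fun j : ℕ => (j : ℝ) * q j)) :
    ∃ (γ : ℕ → ℝ) (p : ℕ → ℕ → ℝ),
      (∀ k, 0 < γ k) ∧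
      -- Condition (A)
      Tendsto γ atTop atTop ∧
      (∀ k j, 0 ≤ p k j) ∧ (∀ k, HasSum (p k) 1) ∧
      -- Condition (B): uniform Lipschitz …
      (∃ L : NNReal, ∀ k,
        LipschitzOnWith L (fun z => γ k * (pgf (p k) z - z)) (Icc (0:ℝ) 1)) ∧
      -- … and pointwise convergence to u(z) = a (g(z) - z)
      (∀ z ∈ Icc (0:ℝ) 1,
        Tendsto (fun k => γ k * (pgf (p k) z - z)) atTop
          (nhds (a * (pgf q z - z)))) := by
  have hU (k : ℕ) : EqOn (fun z => a * (k + 1) * (pgf (lazyOffspring (k + 1 : ℝ)⁻¹ q) z - z))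
      (fun z => a * (pgf q z - z)) (Icc 0 1) := fun z hz =>
    mul_pgf_lazyOffspring_inv_sub_self a k.cast_add_one_ne_zero <|
      summable_mul_pow_of_abs_le_one hq_sum.summable (abs_le.2 ⟨by linarith [hz.1], hz.2⟩)
  obtain ⟨L, hL⟩ : ∃ L, LipschitzOnWith L (fun z => a * (pgf q z - z)) (Icc 0 1) :=
    ⟨_, (lipschitzOnWith_const_mul_pgf_sub_self a hq_mean).mono
      (Icc_subset_Icc_left (by norm_num))⟩
  refine ⟨fun k => a * (k + 1), fun k => lazyOffspring (k + 1 : ℝ)⁻¹ q,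
    fun k => by positivity, ?_, fun k => ?_, fun k => hasSum_lazyOffspring _ hq_sum,
    ⟨L, fun k x hx y hy => ?_⟩, fun z hz => ?_⟩
  · exact (tendsto_atTop_add_const_right _ _ tendsto_natCast_atTop_atTop).const_mul_atTop ha
  · exact lazyOffspring_nonneg (by positivity) (inv_le_one_of_one_le₀ (by simp)) hq_nonneg
  · rw [hU k hx, hU k hy]
    exact hL hx hy
  · exact tendsto_const_nhds.congr fun k => (hU k hz).symm
end

section
/- Assume conditions (A), (C) and (D). Then the pointwise limit Φ₁ of the sequence Φ_{k,1} has the representation Φ₁(λ₁,λ₂) = −a₁₁λ₁ − αλ₁² − ∫_𝕄 (e^{−⟨λ,z⟩} − 1 + λ₁z₁) n₁(dz) for some a₁₁ ∈ ℝ, α ≥ 0 and σ-finite measure n₁ on 𝕄 with n₁({0}) = 0 and ∫_𝕄 (z₁∧z₁² + z₂) n₁(dz) < ∞; and the pointwise limit Φ₂ of the sequence e^{λ₂}Φ_{k,2} has the representation Φ₂(λ₁,λ₂) = a₂₁λ₁ + ∫_{𝕄₋₁} (1 − e^{−⟨λ,z⟩}) n₂(dz) for some a₂₁ ≥ 0 and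 σ-finite measure n₂ on 𝕄₋₁ with n₂({0}) = 0, n₂([0,∞)×{−1}) < ∞ and ∫_{𝕄₋₁} (z₁ + |z₂|) n₂(dz) < ∞. -/
open MeasureTheory Filter Set

noncomputable section

/-- The state space `𝕄 = [0,∞) × ℕ`, as a subset of `ℝ²`. -/
def Mset : Set (ℝ × ℝ) := {z | 0 ≤ z.1 ∧ ∃ n : ℕ, z.2 = (n : ℝ)}

/-- The space `𝕄₋₁ = [0,∞) × (ℕ ∪ {-1})`, as a subset of `ℝ²`. -/
def Mm1set : Set (ℝ × ℝ) := {z | 0 ≤ z.1 ∧ ∃ n : ℤ, (-1 : ℤ) ≤ n ∧ z.2 = (n : ℝ)}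

/-- The data of a branching mechanism `(Φ₁, Φ₂)` of a mixed state branching process. -/
structure BranchingMechanism where
  a11 : ℝ
  a21 : ℝ
  alpha : ℝ
  a21_nonneg : 0 ≤ a21
  alpha_nonneg : 0 ≤ alpha
  n1 : Measure (ℝ × ℝ)
  n2 : Measure (ℝ × ℝ)
  n1_sigmaFinite : SigmaFinite n1
  n2_sigmaFinite : SigmaFinite n2
  /-- `n₁` is supported on `𝕄` -/
  n1_supp : n1 Msetᶜ = 0
  /-- `n₂` is supported on `𝕄₋₁` -/
  n2_supp : n2 Mm1setᶜ = 0
  /-- `n₁` does not charge the origin -/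
  n1_zero : n1 {0} = 0
  /-- `n₂` does not charge the origin -/
  n2_zero : n2 {0} = 0
  /-- `n₂([0,∞) × {-1}) < ∞` -/
  n2_neg1 : n2 {z : ℝ × ℝ | z.2 = -1} ≠ ⊤
  /-- `∫ (z₁ ∧ z₁² + z₂) n₁(dz) < ∞` -/
  n1_moment : ∫⁻ z, ENNReal.ofReal (min z.1 (z.1 ^ 2) + z.2) ∂n1 ≠ ⊤
  /-- `∫ (z₁ + |z₂|) n₂(dz) < ∞` -/
  n2_moment : ∫⁻ z, ENNReal.ofReal (z.1 + |z.2|) ∂n2 ≠ ⊤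

/-- `Φ₁(λ) = -a₁₁λ₁ - αλ₁² - ∫ (e^{-⟨λ,z⟩} - 1 + λ₁z₁) n₁(dz)`. -/
def mPhi1 (B : BranchingMechanism) (l : ℝ × ℝ) : ℝ :=
  -B.a11 * l.1 - B.alpha * l.1 ^ 2 -
    ∫ z, (Real.exp (-(l.1 * z.1 + l.2 * z.2)) - 1 + l.1 * z.1) ∂B.n1

/-- `Φ₂(λ) = a₂₁λ₁ + ∫ (1 - e^{-⟨λ,z⟩}) n₂(dz)`. -/
def mPhi2 (B : BranchingMechanism) (l : ℝ × ℝ) : ℝ :=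
  B.a21 * l.1 + ∫ z, (1 - Real.exp (-(l.1 * z.1 + l.2 * z.2))) ∂B.n2


/-- Generating function of a two-type offspring distribution on `ℕ²`. -/
def pgf2 (p : ℕ × ℕ → ℝ) (s : ℝ × ℝ) : ℝ :=
  ∑' i : ℕ × ℕ, p i * s.1 ^ i.1 * s.2 ^ i.2

/-- `Φ_{k,1}(λ) = kγ_k (e^{-λ₁/k} - g_{k,1}(e^{-λ₁/k}, e^{-λ₂}))`; the index `k ≥ 1`
of the paper corresponds to `k + 1` here. -/
def Phik1 (γ : ℕ → ℝ) (g1 : ℕ → ℝ × ℝ → ℝ) (k : ℕ) (l : ℝ × ℝ) : ℝ :=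
  (k + 1 : ℝ) * γ k *
    (Real.exp (-l.1 / (k + 1 : ℝ)) - g1 k (Real.exp (-l.1 / (k + 1 : ℝ)), Real.exp (-l.2)))

/-- `Φ_{k,2}(λ) = γ_k (e^{-λ₂} - g_{k,2}(e^{-λ₁/k}, e^{-λ₂}))`; the index `k ≥ 1`
of the paper corresponds to `k + 1` here. -/
def Phik2 (γ : ℕ → ℝ) (g2 : ℕ → ℝ × ℝ → ℝ) (k : ℕ) (l : ℝ × ℝ) : ℝ :=
  γ k * (Real.exp (-l.2) - g2 k (Real.exp (-l.1 / (k + 1 : ℝ)), Real.exp (-l.2)))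

/-!
The two prelimits are, up to a factor tending to `1`, Laplace exponents
`∫ (1 - e^{-⟨λ,z⟩}) π_k(dz)` of the finite displacement measures `π_k`. In the coordinates
`w = (e^{-z₁}, e^{-z₂})` the displacements lie in a compact strip and `e^{-⟨λ,z⟩}` becomes the
continuous function `w₁^λ₁ w₂^λ₂`. The squared distance to the image `(1, 1)` of the origin is a
combination of compensated monomials, hence has bounded `π_k`-integrals, so the measures weighted by
it converge weakly along an ultrafilter. The atom of the limit at `(1, 1)` yields the quadratic term
and the rest, divided by the weight, the Lévy measure.

Compactification adds the points at infinity `w₁ = 0` and `w₂ = 0`. By Fatou's lemma as `t → 0`, the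
linear bounds on `Φ(t, 0)` and `Φ(0, t)` show that these carry no mass, and give the first moments.
For `Φ₂`, the bound `Φ₂(t, 0) ≥ 0` as `t → ∞` rules out the quadratic term and, again by Fatou's
lemma, makes `z₁` integrable, so that the compensator can be absorbed into a nonnegative drift.
-/

lemma continuous_update_div {E : Type*} [TopologicalSpace E] [T1Space E] [DecidableEq E] {o : E}
    {h ψ : E → ℝ} {d : ℝ} (hh : Continuous h) (hne : ∀ z ≠ o, h z ≠ 0) (hψ : Continuous ψ)
    (hd : Tendsto (fun z => ψ z / h z) (nhdsWithin o {o}ᶜ) (nhds d)) :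
    Continuous (Function.update (fun z => ψ z / h z) o d) := by
  rw [← continuousOn_univ, continuousOn_update_iff, ← compl_eq_univ_sdiff]
  exact ⟨hψ.continuousOn.div hh.continuousOn hne, fun _ => hd⟩

section LevyLimit

variable {E κ : Type*} [TopologicalSpace E] [MeasurableSpace E]

/-- `a` and `N` describe the limit along `l` of the measures `ν k`, which may blow up at `o`:
after weighting by `h`, the mass at `o` becomes `a`, and `N` is the limit away from `o`. -/
structure IsLevyLimit (l : Filter κ) (ν : κ → Measure E) (o : E) (h : E → ℝ) (a : ℝ)
    (N : Measure E) : Prop where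
  nonneg : 0 ≤ a
  measure_singleton : N {o} = 0
  integrable {ψ : E → ℝ} {d : ℝ} : Continuous ψ → ψ o = 0 →
    Tendsto (fun z => ψ z / h z) (nhdsWithin o {o}ᶜ) (nhds d) → Integrable ψ N
  tendsto_integral {ψ : E → ℝ} {d : ℝ} : Continuous ψ → ψ o = 0 →
    Tendsto (fun z => ψ z / h z) (nhdsWithin o {o}ᶜ) (nhds d) →
    Tendsto (fun k => ∫ z, ψ z ∂ν k) l (nhds (a * d + ∫ z, ψ z ∂N))

lemma integral_withDensity_ofReal {X : Type*} [MeasurableSpace X] {μ : Measure X} {f : X → ℝ}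
    (hf : Measurable f) (hf0 : ∀ z, 0 ≤ f z) (g : X → ℝ) :
    ∫ z, g z ∂μ.withDensity (fun z => ENNReal.ofReal (f z)) = ∫ z, f z * g z ∂μ := by
  rw [integral_withDensity_eq_integral_toReal_smul hf.ennreal_ofReal (by simp)]
  simp only [ENNReal.toReal_ofReal (hf0 _), smul_eq_mul]

lemma integrable_withDensity_ofReal_iff {X : Type*} [MeasurableSpace X] {μ : Measure X} {f : X → ℝ}
    (hf : Measurable f) (hf0 : ∀ z, 0 ≤ f z) {g : X → ℝ} :
    Integrable g (μ.withDensity fun z => ENNReal.ofReal (f z)) ↔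
      Integrable (fun z => f z * g z) μ := by
  rw [integrable_withDensity_iff_integrable_smul' hf.ennreal_ofReal (by simp)]
  simp only [ENNReal.toReal_ofReal (hf0 _), smul_eq_mul]

variable [CompactSpace E] [BorelSpace E]

lemma IsLevyLimit.ae_eq_zero {l : Filter κ} [l.NeBot] {ν : κ → Measure E}
    [∀ k, IsFiniteMeasure (ν k)] {o : E} {h : E → ℝ} {a : ℝ} {N : Measure E}
    (H : IsLevyLimit l ν o h a N) (hh : Continuous h) (hnn : ∀ z, 0 ≤ h z)
    (hzero : ∀ z, h z = 0 ↔ z = o) {f : E → ℝ} (hf : Continuous f) (hf0 : ∀ z, 0 ≤ f z)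
    (hfo : f o = 0) {ε : κ → ℝ} (hε : Tendsto ε l (nhds 0))
    (hfε : ∀ᶠ k in l, ∀ᵐ z ∂ν k, f z ≤ ε k) : f =ᵐ[N] 0 := by
  have hψ : Continuous fun z => h z * f z := hh.mul hf
  have hψo : h o * f o = 0 := by rw [hfo, mul_zero]
  have hquot {c : ℝ → ℝ} (hc : Continuous c) :
      Tendsto (fun z => h z * c (f z) / h z) (nhdsWithin o {o}ᶜ) (nhds (c 0)) := by
    have hlim := (hc.comp hf).tendsto o
    rw [Function.comp_apply, hfo] at hlim
    refine (hlim.mono_left nhdsWithin_le_nhds).congr' ?_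
    filter_upwards [self_mem_nhdsWithin] with z hz
    exact (mul_div_cancel_left₀ _ ((hzero z).not.2 hz)).symm
  have hweight : Tendsto (fun k => ∫ z, h z ∂ν k) l (nhds (a * 1 + ∫ z, h z ∂N)) :=
    H.tendsto_integral hh ((hzero o).2 rfl) (by simpa using hquot (continuous_const (y := 1)))
  have hlim : Tendsto (fun k => ∫ z, h z * f z ∂ν k) l (nhds 0) := by
    refine squeeze_zero' (.of_forall fun k => integral_nonneg fun z => mul_nonneg (hnn z) (hf0 z))
      (g := fun k => ε k * ∫ z, h z ∂ν k) ?_ (by simpa using hε.mul hweight)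
    filter_upwards [hfε] with k hfk
    rw [← integral_const_mul]
    refine integral_mono_ae (hψ.integrable_of_hasCompactSupport (.of_compactSpace _))
      ((hh.const_mul _).integrable_of_hasCompactSupport (.of_compactSpace _)) ?_
    filter_upwards [hfk] with z hz
    rw [mul_comm (h z)]
    exact mul_le_mul_of_nonneg_right hz (hnn z)
  have hzero_int : ∫ z, h z * f z ∂N = 0 := by
    simpa using (tendsto_nhds_unique hlim
      (H.tendsto_integral hψ hψo (hquot continuous_id))).symm
  have hae := (integral_eq_zero_iff_of_nonneg (fun z => mul_nonneg (hnn z) (hf0 z))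
    (H.integrable hψ hψo (hquot continuous_id))).1 hzero_int
  filter_upwards [hae, measure_eq_zero_iff_ae_notMem.1 H.measure_singleton] with z hz hzo
  exact (mul_eq_zero.1 hz).resolve_left ((hzero z).not.2 hzo)

variable [T2Space E]

lemma exists_tendsto_integral_of_measure_univ_le {U : Ultrafilter κ} (μ : κ → Measure E)
    [∀ k, IsFiniteMeasure (μ k)] {C : NNReal} (hC : ∀ᶠ k in U, μ k univ ≤ C) :
    ∃ ν : Measure E, IsFiniteMeasure ν ∧ ∀ f : E → ℝ, Continuous f →
      Tendsto (fun k => ∫ z, f z ∂μ k) U (nhds (∫ z, f z ∂ν)) := by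
  let m (k : κ) : FiniteMeasure E := ⟨μ k, inferInstance⟩
  have hm : ∀ᶠ k in U, (m k).mass ≤ C := by
    filter_upwards [hC] with k hk
    rwa [← ENNReal.coe_le_coe, FiniteMeasure.ennreal_mass]
  obtain ⟨ν, -, hν⟩ := (isCompact_setOfPred_finiteMeasure_le_of_compactSpace E
    C).ultrafilter_le_nhds (U.map m) (le_principal_iff.2 hm)
  exact ⟨ν, inferInstance, fun f hf => FiniteMeasure.tendsto_iff_forall_integral_tendsto.1 hν
    (BoundedContinuousFunction.mkOfCompact ⟨f, hf⟩)⟩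

lemma integral_eq_singleton_add_withDensity (μ : Measure E) [IsFiniteMeasure μ] {o : E}
    {h f ψ : E → ℝ} (hh : Measurable h) (hnn : ∀ z, 0 ≤ h z) (hne : ∀ z ≠ o, h z ≠ 0)
    (hf : Continuous f) (hψ : ∀ z ≠ o, ψ z = h z * f z) :
    Integrable ψ ((μ.restrict {o}ᶜ).withDensity fun z => ENNReal.ofReal (h z)⁻¹) ∧
      ∫ z, f z ∂μ = μ.real {o} * f o +
        ∫ z, ψ z ∂(μ.restrict {o}ᶜ).withDensity fun z => ENNReal.ofReal (h z)⁻¹ := by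
  have hf_int : Integrable f μ := hf.integrable_of_hasCompactSupport (.of_compactSpace f)
  have hinv (z) : 0 ≤ (h z)⁻¹ := inv_nonneg.2 (hnn z)
  have hcancel : (fun z => (h z)⁻¹ * ψ z) =ᵐ[μ.restrict {o}ᶜ] f := by
    filter_upwards [ae_restrict_mem (measurableSet_singleton o).compl] with z hz
    rw [hψ z hz, inv_mul_cancel_left₀ (hne z hz)]
  refine ⟨(integrable_withDensity_ofReal_iff hh.inv hinv).2
    ((integrable_congr hcancel).2 hf_int.restrict), ?_⟩
  rw [integral_withDensity_ofReal (f := fun z => (h z)⁻¹) hh.inv hinv, integral_congr_ae hcancel,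
    ← integral_add_compl (measurableSet_singleton o) hf_int, integral_singleton, smul_eq_mul]

lemma exists_isLevyLimit {U : Ultrafilter κ} (ν : κ → Measure E) [∀ k, IsFiniteMeasure (ν k)]
    {o : E} {h : E → ℝ} (hh : Continuous h) (hnn : ∀ z, 0 ≤ h z) (hzero : ∀ z, h z = 0 ↔ z = o)
    {C : ℝ} (hC : ∀ᶠ k in U, ∫ z, h z ∂ν k ≤ C) :
    ∃ a N, IsLevyLimit U ν o h a N := by
  classical
  have hne : ∀ z ≠ o, h z ≠ 0 := fun z hz => (hzero z).not.2 hz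
  let μ (k : κ) : Measure E := (ν k).withDensity fun z => ENNReal.ofReal (h z)
  have hμ (k : κ) : μ k univ = ENNReal.ofReal (∫ z, h z ∂ν k) := by
    rw [withDensity_apply _ MeasurableSet.univ, Measure.restrict_univ,
      ofReal_integral_eq_lintegral_ofReal
        (hh.integrable_of_hasCompactSupport (.of_compactSpace h)) (ae_of_all _ hnn)]
  have (k : κ) : IsFiniteMeasure (μ k) := ⟨by rw [hμ]; exact ENNReal.ofReal_lt_top⟩
  obtain ⟨m, hm, hlim⟩ := exists_tendsto_integral_of_measure_univ_le (U := U) μ (C := C.toNNReal)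
    (hC.mono fun k hk => (hμ k).trans_le (ENNReal.ofReal_le_ofReal hk))
  have hupd {ψ : E → ℝ} (d : ℝ) (hψo : ψ o = 0) (z : E) :
      h z * Function.update (fun z => ψ z / h z) o d z = ψ z := by
    rcases eq_or_ne z o with rfl | hz
    · rw [(hzero z).2 rfl, zero_mul, hψo]
    · rw [Function.update_of_ne hz, mul_div_cancel₀ _ (hne z hz)]
  refine ⟨m.real {o}, (m.restrict {o}ᶜ).withDensity fun z => ENNReal.ofReal (h z)⁻¹,
    measureReal_nonneg, withDensity_absolutelyContinuous _ _ (by simp), ?_, ?_⟩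
  · intro ψ d hψ hψo hd
    exact (integral_eq_singleton_add_withDensity m hh.measurable hnn hne
      (continuous_update_div hh hne hψ hd) fun z _ => (hupd d hψo z).symm).1
  · intro ψ d hψ hψo hd
    have hF := continuous_update_div hh hne hψ hd
    have hsplit := (integral_eq_singleton_add_withDensity m hh.measurable hnn hne hF
      fun z _ => (hupd d hψo z).symm).2
    rw [Function.update_self] at hsplit
    rw [← hsplit]
    simpa only [μ, integral_withDensity_ofReal hh.measurable hnn, hupd d hψo] using hlim _ hF

end LevyLimit

section Fatou

variable {X : Type*} [MeasurableSpace X] {μ : Measure X}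

lemma lintegral_le_ofReal_of_tendsto {ι : Type*} {u : Filter ι} [u.NeBot] [u.IsCountablyGenerated]
    {f : ι → X → ℝ} {F : X → ENNReal} {C : ℝ} (hmeas : ∀ i, AEMeasurable (f i) μ)
    (hf : ∀ᶠ i in u, Integrable (f i) μ ∧ 0 ≤ᵐ[μ] f i ∧ ∫ z, f i z ∂μ ≤ C)
    (hF : ∀ᵐ z ∂μ, Tendsto (fun i => ENNReal.ofReal (f i z)) u (nhds (F z))) :
    ∫⁻ z, F z ∂μ ≤ ENNReal.ofReal C :=
  calc ∫⁻ z, F z ∂μ = ∫⁻ z, liminf (fun i => ENNReal.ofReal (f i z)) u ∂μ :=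
        lintegral_congr_ae (hF.mono fun _ hz => hz.liminf_eq.symm)
    _ ≤ liminf (fun i => ∫⁻ z, ENNReal.ofReal (f i z) ∂μ) u :=
        lintegral_liminf_le' fun i => (hmeas i).ennreal_ofReal
    _ ≤ ENNReal.ofReal C := by
        refine (liminf_le_liminf (hf.mono fun i ⟨h_int, hnn, hC⟩ => ?_)).trans (liminf_const _).le
        rw [← ofReal_integral_eq_lintegral_ofReal h_int hnn]
        exact ENNReal.ofReal_le_ofReal hC

lemma integrable_of_lintegral_ofReal_le {f : X → ℝ} {C : ℝ} (hf : AEMeasurable f μ)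
    (hf0 : 0 ≤ᵐ[μ] f) (hC : ∫⁻ z, ENNReal.ofReal (f z) ∂μ ≤ ENNReal.ofReal C) :
    Integrable f μ :=
  (lintegral_ofReal_ne_top_iff_integrable hf.aestronglyMeasurable hf0).1
    (hC.trans_lt ENNReal.ofReal_lt_top).ne

lemma tendsto_ofReal_one_sub_rpow_sub_div {x : ℝ} (hx : 0 ≤ x) :
    Tendsto (fun t : ℝ => ENNReal.ofReal ((1 - x ^ t - t * (1 - x)) / t)) (nhdsWithin 0 (Ioi 0))
      (nhds (if x = 0 then ⊤ else ENNReal.ofReal (-Real.log x - (1 - x)))) := by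
  rcases hx.eq_or_lt with rfl | hx
  · rw [if_pos rfl]
    have hinv : Tendsto (fun t : ℝ => t⁻¹ - 1) (nhdsWithin 0 (Ioi 0)) atTop :=
      tendsto_atTop_add_const_right _ _ tendsto_inv_nhdsGT_zero
    refine (ENNReal.tendsto_ofReal_atTop.comp hinv).congr' ?_
    filter_upwards [self_mem_nhdsWithin] with t ht
    have ht0 : t ≠ 0 := (mem_Ioi.1 ht).ne'
    simp [Real.zero_rpow ht0, sub_div, div_self ht0]
  · rw [if_neg hx.ne']
    have hslope :=
      (Real.hasStrictDerivAt_const_rpow hx 0).hasDerivAt.tendsto_slope_zero_right.neg.sub_const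
        (1 - x)
    simp only [Real.rpow_zero, one_mul, zero_add, smul_eq_mul] at hslope
    refine ENNReal.tendsto_ofReal (hslope.congr' ?_)
    filter_upwards [self_mem_nhdsWithin] with t ht
    field_simp [(mem_Ioi.1 ht).ne']
    ring

lemma one_sub_rpow_sub_nonneg {x t : ℝ} (hx : 0 ≤ x) (ht : t ∈ Ioc (0 : ℝ) 1) :
    0 ≤ 1 - x ^ t - t * (1 - x) := by
  have bernoulli := rpow_one_add_le_one_add_mul_self (s := x - 1) (by linarith) ht.1.le ht.2
  rw [add_sub_cancel] at bernoulli
  linarith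

lemma ae_pos_and_integrable_sub_log {T : X → ℝ} {C : ℝ} (hT : Measurable T) (hT0 : 0 ≤ᵐ[μ] T)
    (h_int : ∀ t ∈ Ioc (0 : ℝ) 1, Integrable (fun z => 1 - T z ^ t - t * (1 - T z)) μ)
    (hC : ∀ t ∈ Ioc (0 : ℝ) 1, ∫ z, (1 - T z ^ t - t * (1 - T z)) ∂μ ≤ C * t) :
    (∀ᵐ z ∂μ, 0 < T z) ∧ Integrable (fun z => -Real.log (T z) - (1 - T z)) μ := by
  let F (z : X) : ENNReal := if T z = 0 then ⊤ else ENNReal.ofReal (-Real.log (T z) - (1 - T z))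
  have hFmeas : Measurable F :=
    Measurable.ite (hT (measurableSet_singleton 0)) measurable_const (by fun_prop)
  have hF : ∫⁻ z, F z ∂μ ≤ ENNReal.ofReal C := by
    refine lintegral_le_ofReal_of_tendsto (u := nhdsWithin (0 : ℝ) (Ioi 0))
      (f := fun t z => (1 - T z ^ t - t * (1 - T z)) / t) (fun t => by fun_prop) ?_
      (hT0.mono fun z hz => tendsto_ofReal_one_sub_rpow_sub_div hz)
    filter_upwards [Ioc_mem_nhdsGT one_pos] with t ht
    refine ⟨(h_int t ht).div_const t, ?_, ?_⟩
    · filter_upwards [hT0] with z hz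
      exact div_nonneg (one_sub_rpow_sub_nonneg hz ht) ht.1.le
    · rw [integral_div, div_le_iff₀ ht.1]
      exact hC t ht
  have hpos : ∀ᵐ z ∂μ, 0 < T z := by
    filter_upwards [hT0, ae_lt_top hFmeas (hF.trans_lt ENNReal.ofReal_lt_top).ne] with z hz hz_lt
    refine hz.lt_of_ne fun h => ?_
    simp [F, ← h] at hz_lt
  refine ⟨hpos, integrable_of_lintegral_ofReal_le (C := C) (by fun_prop) ?_ ?_⟩
  · filter_upwards [hpos] with z hz
    simpa using by linarith [Real.log_le_sub_one_of_pos hz]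
  · refine (lintegral_congr_ae ?_).trans_le hF
    filter_upwards [hpos] with z hz
    simp [F, hz.ne']

lemma sigmaFinite_of_integrable_of_ae_ne_zero {f : X → ℝ} (hf : Integrable f μ)
    (hpos : ∀ᵐ z ∂μ, f z ≠ 0) : SigmaFinite μ := by
  have h := hf.aefinStronglyMeasurable
  have : μ.restrict h.sigmaFiniteSet = μ := by
    refine Measure.restrict_eq_self_of_ae_mem ?_
    have h0 := (ae_restrict_iff' h.measurableSet.compl).1 h.ae_eq_zero_compl
    filter_upwards [hpos, h0] with z hz hz0
    by_contra hmem
    exact hz (hz0 hmem)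
  rw [← this]
  exact h.sigmaFinite_restrict

end Fatou

lemma min_sq_le_four_mul (w : ℝ) : min w (w ^ 2) ≤ 4 * (w - (1 - Real.exp (-w))) := by
  rcases le_or_gt w 2 with h | h
  · have h1 : 1 - w / 2 ≤ Real.exp (-(w / 2)) := by linarith [Real.add_one_le_exp (-(w / 2))]
    have h2 : Real.exp (-w) = Real.exp (-(w / 2)) ^ 2 := by
      rw [← Real.exp_nat_mul]; congr 1; push_cast; ring
    calc min w (w ^ 2) ≤ w ^ 2 := min_le_right _ _
      _ = 4 * (w - (1 - (1 - w / 2) ^ 2)) := by ring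
      _ ≤ 4 * (w - (1 - Real.exp (-w))) := by
        rw [h2]
        gcongr
        linarith
  · linarith [min_le_left w (w ^ 2), Real.exp_pos (-w)]

lemma tendsto_one_sub_rpow_sub_div_sq (p : ℝ) :
    Tendsto (fun t : ℝ => (1 - t ^ p - p * (1 - t)) / (1 - t) ^ 2) (nhdsWithin 1 {1}ᶜ)
      (nhds (p * (1 - p) / 2)) := by
  have hpos : ∀ᶠ t : ℝ in nhdsWithin 1 {1}ᶜ, 0 < t :=
    nhdsWithin_le_nhds (lt_mem_nhds one_pos)
  have hnum : ∀ t : ℝ, 0 < t → HasDerivAt (fun t => 1 - t ^ p - p * (1 - t))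
      (p - p * t ^ (p - 1)) t := fun t ht => by
    have := ((Real.hasDerivAt_rpow_const (p := p) (Or.inl ht.ne')).const_sub 1).sub
      (((hasDerivAt_id t).const_sub 1).const_mul p)
    exact this.congr_deriv (by simp; ring)
  have hden (t : ℝ) : HasDerivAt (fun t : ℝ => (1 - t) ^ 2) (-2 * (1 - t)) t :=
    (((hasDerivAt_id t).const_sub 1).pow 2).congr_deriv (by simp)
  refine HasDerivAt.lhopital_zero_nhdsNE (hpos.mono hnum) (.of_forall hden) ?_ ?_ ?_ ?_
  · filter_upwards [self_mem_nhdsWithin] with t ht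
    exact mul_ne_zero (by norm_num) (sub_ne_zero.2 (Ne.symm ht))
  · simpa using (hnum 1 one_pos).continuousAt.tendsto.mono_left nhdsWithin_le_nhds
  · simpa using (hden 1).continuousAt.tendsto.mono_left nhdsWithin_le_nhds
  · have hslope := (hasDerivAt_iff_tendsto_slope.1
      (Real.hasDerivAt_rpow_const (x := 1) (p := p - 1) (Or.inl one_ne_zero))).const_mul (-p / 2)
    simp only [Real.one_rpow, mul_one] at hslope
    rw [show p * (1 - p) / 2 = -p / 2 * (p - 1) by ring]
    refine hslope.congr' ?_
    filter_upwards [self_mem_nhdsWithin] with t ht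
    have : 1 - t ≠ 0 := sub_ne_zero.2 (Ne.symm ht)
    have : t - 1 ≠ 0 := sub_ne_zero.2 ht
    rw [slope_def_field, Real.one_rpow]
    field_simp
    ring

section ExpStrip

/-- The strip `[0,∞) × {-m, 1 - m, …}`: it is `𝕄` for `m = 0` and `𝕄₋₁` for `m = 1`. -/
def latticeStrip (m : ℕ) : Set (ℝ × ℝ) := {z | 0 ≤ z.1 ∧ ∃ j : ℤ, -(m : ℤ) ≤ j ∧ z.2 = j}

lemma measurableSet_latticeStrip (m : ℕ) : MeasurableSet (latticeStrip m) := by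
  have : latticeStrip m =
      Ici 0 ×ˢ ((fun j : ℤ => (j : ℝ)) '' Ici (-(m : ℤ))) := by
    ext z
    simp [latticeStrip, eq_comm]
  rw [this]
  exact measurableSet_Ici.prod ((to_countable _).image _).measurableSet

/-- The exponential coordinates `(e^{-z₁}, e^{-z₂})`, which compactify the strips and turn Laplace
exponents into monomials. -/
def expCoord (z : ℝ × ℝ) : ℝ × ℝ := (Real.exp (-z.1), Real.exp (-z.2))

/-- The inverse of `expCoord` on the open quadrant. -/
def logCoord (w : ℝ × ℝ) : ℝ × ℝ := (-Real.log w.1, -Real.log w.2)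

/-- The closure in exponential coordinates of `[-1,∞) × {-m, 1 - m, …}`. The slack to the left of
the origin makes room for the displacements `-1/k` of the approximating processes. -/
def expStrip (m : ℕ) : Set (ℝ × ℝ) :=
  Icc 0 (Real.exp 1) ×ˢ insert 0 (range fun n : ℕ => Real.exp (m - n))

lemma isCompact_expStrip (m : ℕ) : IsCompact (expStrip m) := by
  refine isCompact_Icc.prod (Tendsto.isCompact_insert_range ?_)
  refine Real.tendsto_exp_atBot.comp (tendsto_atBot_add_const_left _ _ ?_)
  exact tendsto_neg_atTop_atBot.comp tendsto_natCast_atTop_atTop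

instance (m : ℕ) : CompactSpace (expStrip m) := isCompact_iff_compactSpace.1 (isCompact_expStrip m)

lemma expCoord_mem_expStrip {m : ℕ} {z : ℝ × ℝ} (hz : -1 ≤ z.1)
    (hz' : ∃ j : ℤ, -(m : ℤ) ≤ j ∧ z.2 = j) : expCoord z ∈ expStrip m := by
  obtain ⟨j, hj, hzj⟩ := hz'
  obtain ⟨n, hn⟩ := Int.eq_ofNat_of_zero_le (show 0 ≤ j + m by linarith)
  have hnj : (j : ℝ) + m = n := by exact_mod_cast hn
  refine ⟨⟨(Real.exp_pos _).le, Real.exp_le_exp.2 (by linarith)⟩, Or.inr ⟨n, ?_⟩⟩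
  change Real.exp _ = Real.exp (-z.2)
  rw [hzj, ← hnj]
  congr 1
  ring

lemma logCoord_mem_latticeStrip {m : ℕ} {w : ℝ × ℝ} (hw : w ∈ expStrip m) (h1 : w.1 ≤ 1)
    (h2 : 0 < w.2) : logCoord w ∈ latticeStrip m := by
  obtain ⟨⟨hw0, -⟩, hw2 | ⟨n, hn⟩⟩ := hw
  · exact absurd hw2 h2.ne'
  · refine ⟨neg_nonneg.2 (Real.log_nonpos hw0 h1), n - m, by linarith, ?_⟩
    simp only [logCoord, ← hn, Real.log_exp]
    push_cast
    ring

lemma exp_neg_logCoord {w : ℝ × ℝ} (h1 : 0 < w.1) (h2 : 0 < w.2) (l : ℝ × ℝ) :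
    Real.exp (-(l.1 * (logCoord w).1 + l.2 * (logCoord w).2)) = w.1 ^ l.1 * w.2 ^ l.2 := by
  rw [Real.rpow_def_of_pos h1, Real.rpow_def_of_pos h2, ← Real.exp_add]
  congr 1
  simp only [logCoord]
  ring

lemma rpow_expCoord (l z : ℝ × ℝ) :
    (expCoord z).1 ^ l.1 * (expCoord z).2 ^ l.2 = Real.exp (-(l.1 * z.1 + l.2 * z.2)) := by
  simp only [expCoord]
  rw [← Real.exp_mul, ← Real.exp_mul, ← Real.exp_add]
  congr 1
  ring

lemma logCoord_eq_zero_iff {w : ℝ × ℝ} (h1 : 0 < w.1) (h2 : 0 < w.2) :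
    logCoord w = 0 ↔ w = (1, 1) := by
  have hlog {x : ℝ} (hx : 0 < x) : -Real.log x = 0 ↔ x = 1 :=
    ⟨fun h => Real.eq_one_of_pos_of_log_eq_zero hx (neg_eq_zero.1 h), fun h => by simp [h]⟩
  rw [Prod.ext_iff, Prod.ext_iff]
  exact and_congr (hlog h1) (hlog h2)

/-- The image of the origin in exponential coordinates, as a point of `expStrip m`. -/
def expOrigin (m : ℕ) : expStrip m :=
  ⟨(1, 1), ⟨zero_le_one, Real.one_le_exp zero_le_one⟩, Or.inr ⟨m, by simp⟩⟩

/-- The exponent `1 - e^{-⟨l,z⟩}`, compensated by `l₁(1 - e^{-z₁})`, in exponential coordinates. -/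
def compensated (l w : ℝ × ℝ) : ℝ := 1 - w.1 ^ l.1 * w.2 ^ l.2 - l.1 * (1 - w.1)

/-- The weight that makes the approximating measures bounded near the origin. -/
def sqDistOne (w : ℝ × ℝ) : ℝ := (1 - w.1) ^ 2 + (1 - w.2) ^ 2

lemma sqDistOne_eq_compensated (w : ℝ × ℝ) :
    sqDistOne w = 2 * compensated (0, 1) w - compensated (0, 2) w - compensated (2, 0) w := by
  simp only [sqDistOne, compensated, Real.rpow_zero, Real.rpow_one, Real.rpow_two]
  ring

lemma sqDistOne_eq_zero_iff {m : ℕ} (w : expStrip m) : sqDistOne w = 0 ↔ w = expOrigin m := by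
  rw [Subtype.ext_iff, Prod.ext_iff, sqDistOne,
    add_eq_zero_iff_of_nonneg (sq_nonneg _) (sq_nonneg _), sq_eq_zero_iff, sq_eq_zero_iff,
    sub_eq_zero, sub_eq_zero]
  exact and_congr eq_comm eq_comm

lemma continuous_sqDistOne : Continuous sqDistOne := by
  unfold sqDistOne
  fun_prop

lemma continuous_rpow_mul_rpow {l : ℝ × ℝ} (hl : 0 ≤ l) :
    Continuous fun w : ℝ × ℝ => w.1 ^ l.1 * w.2 ^ l.2 :=
  (continuous_fst.rpow_const fun _ => Or.inr hl.1).mul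
    (continuous_snd.rpow_const fun _ => Or.inr hl.2)

lemma continuous_compensated {l : ℝ × ℝ} (hl : 0 ≤ l) : Continuous (compensated l) :=
  (continuous_const.sub (continuous_rpow_mul_rpow hl)).sub (by fun_prop)

lemma compensated_expOrigin (l : ℝ × ℝ) (m : ℕ) : compensated l (expOrigin m) = 0 := by
  simp [compensated, expOrigin]

lemma eventually_snd_eq_one (m : ℕ) : ∀ᶠ w : expStrip m in nhds (expOrigin m), w.1.2 = 1 := by
  have hlog : Tendsto (fun w : expStrip m => Real.log w.1.2) (nhds (expOrigin m)) (nhds 0) := by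
    have hsnd : Tendsto (fun w : expStrip m => w.1.2) (nhds (expOrigin m)) (nhds 1) :=
      Continuous.tendsto (by fun_prop) (expOrigin m)
    simpa using hsnd.log one_ne_zero
  have hpos : ∀ᶠ w : expStrip m in nhds (expOrigin m), w.1.2 ∈ Ioi (0 : ℝ) :=
    Continuous.tendsto (f := fun w : expStrip m => w.1.2) (by fun_prop) (expOrigin m)
      (Ioi_mem_nhds one_pos)
  filter_upwards [hlog (Ioo_mem_nhds (neg_lt_zero.2 one_pos) one_pos), hpos] with w hw hw0
  obtain hw2 | ⟨n, hn⟩ := w.2.2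
  · exact absurd hw2 (mem_Ioi.1 hw0).ne'
  · simp only [mem_preimage, ← hn, Real.log_exp, mem_Ioo] at hw
    have h1 : (-1 : ℤ) < m - n := by exact_mod_cast hw.1
    have h2 : (m - n : ℤ) < 1 := by exact_mod_cast hw.2
    have h0 : (m : ℤ) = n := by omega
    have h0' : (m : ℝ) = n := by exact_mod_cast h0
    simp [← hn, h0']

lemma tendsto_compensated_div_sqDistOne (l : ℝ × ℝ) (m : ℕ) :
    Tendsto (fun w : expStrip m => compensated l w / sqDistOne w)
      (nhdsWithin (expOrigin m) {expOrigin m}ᶜ) (nhds (l.1 * (1 - l.1) / 2)) := by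
  have hsnd := nhdsWithin_le_nhds (s := {expOrigin m}ᶜ) (eventually_snd_eq_one m)
  have hfst : Tendsto (fun w : expStrip m => w.1.1) (nhdsWithin (expOrigin m) {expOrigin m}ᶜ)
      (nhdsWithin 1 {1}ᶜ) := by
    refine tendsto_nhdsWithin_iff.2 ⟨?_, ?_⟩
    · exact (Continuous.tendsto (f := fun w : expStrip m => w.1.1) (by fun_prop)
        (expOrigin m)).mono_left nhdsWithin_le_nhds
    · filter_upwards [hsnd, self_mem_nhdsWithin] with w hw hne h
      exact hne (Subtype.ext (Prod.ext h hw))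
  refine ((tendsto_one_sub_rpow_sub_div_sq l.1).comp hfst).congr' ?_
  filter_upwards [hsnd] with w hw
  simp [compensated, sqDistOne, hw]

lemma integral_comap_subtype_val {X : Type*} [MeasurableSpace X] {μ : Measure X} {s : Set X}
    (hs : MeasurableSet s) (hμ : ∀ᵐ x ∂μ, x ∈ s) (f : X → ℝ) :
    ∫ x : s, f x ∂μ.comap Subtype.val = ∫ x, f x ∂μ := by
  rw [integral_subtype_comap hs, Measure.restrict_eq_self_of_ae_mem hμ]

/-- The measure `π` on the plane, read in exponential coordinates on `expStrip m`. -/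
def expMeasure (m : ℕ) (π : Measure (ℝ × ℝ)) : Measure (expStrip m) :=
  (π.map expCoord).comap Subtype.val

lemma measurable_expCoord : Measurable expCoord := by unfold expCoord; fun_prop

lemma measurable_logCoord : Measurable logCoord := by unfold logCoord; fun_prop

variable {m : ℕ} {π : Measure (ℝ × ℝ)}

instance [IsFiniteMeasure π] : IsFiniteMeasure (expMeasure m π) := by
  unfold expMeasure
  infer_instance

lemma integral_expMeasure (hπ : ∀ᵐ z ∂π, expCoord z ∈ expStrip m) {f : ℝ × ℝ → ℝ}
    (hf : Measurable f) : ∫ w, f w ∂expMeasure m π = ∫ z, f (expCoord z) ∂π := by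
  have hmeas := (isCompact_expStrip m).measurableSet
  rw [expMeasure, integral_comap_subtype_val hmeas
    ((ae_map_iff measurable_expCoord.aemeasurable hmeas).2 hπ),
    integral_map measurable_expCoord.aemeasurable hf.aestronglyMeasurable]

lemma ae_expMeasure {p : ℝ × ℝ → Prop} (hp : MeasurableSet {w | p w})
    (hπ : ∀ᵐ z ∂π, p (expCoord z)) : ∀ᵐ w : expStrip m ∂expMeasure m π, p w := by
  refine ae_of_ae_map (f := Subtype.val) measurable_subtype_coe.aemeasurable ?_
  rw [expMeasure, map_comap_subtype_coe (isCompact_expStrip m).measurableSet]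
  exact ae_restrict_of_ae ((ae_map_iff measurable_expCoord.aemeasurable hp).2 hπ)

/-- The Laplace exponent `l ↦ ∫ (1 - e^{-⟨l,z⟩}) π(dz)`. -/
def laplaceExponent (π : Measure (ℝ × ℝ)) (l : ℝ × ℝ) : ℝ :=
  ∫ z, (1 - Real.exp (-(l.1 * z.1 + l.2 * z.2))) ∂π

lemma integral_compensated_expMeasure [IsFiniteMeasure π]
    (hπ : ∀ᵐ z ∂π, expCoord z ∈ expStrip m) {l : ℝ × ℝ} (hl : 0 ≤ l) :
    ∫ w, compensated l w ∂expMeasure m π =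
      laplaceExponent π l - l.1 * laplaceExponent π (1, 0) := by
  have hcont {q : ℝ × ℝ} (hq : 0 ≤ q) : Continuous fun w : ℝ × ℝ => 1 - w.1 ^ q.1 * w.2 ^ q.2 :=
    continuous_const.sub (continuous_rpow_mul_rpow hq)
  have hlaplace {q : ℝ × ℝ} (hq : 0 ≤ q) :
      ∫ w : expStrip m, (1 - w.1.1 ^ q.1 * w.1.2 ^ q.2) ∂expMeasure m π = laplaceExponent π q := by
    rw [integral_expMeasure hπ (hcont hq).measurable]
    simp only [rpow_expCoord, laplaceExponent]
  have h_int {q : ℝ × ℝ} (hq : 0 ≤ q) :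
      Integrable (fun w : expStrip m => 1 - w.1.1 ^ q.1 * w.1.2 ^ q.2) (expMeasure m π) :=
    ((hcont hq).comp continuous_subtype_val).integrable_of_hasCompactSupport (.of_compactSpace _)
  have he : (0 : ℝ × ℝ) ≤ (1, 0) := ⟨zero_le_one, le_rfl⟩
  rw [← hlaplace hl, ← hlaplace he, ← integral_const_mul, ← integral_sub (h_int hl)
    ((h_int he).const_mul _)]
  simp [compensated]

end ExpStrip

section LevyKhintchine

/-- The Lévy–Khintchine representation `Φ(l) = b l₁ - α l₁² - ∫ (e^{-⟨l,z⟩} - 1 + l₁z₁) n(dz)`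
with a Lévy measure `n` on `latticeStrip m`. -/
structure HasLevyKhintchine (m : ℕ) (Φ : ℝ × ℝ → ℝ) (b α : ℝ) (n : Measure (ℝ × ℝ)) : Prop where
  nonneg : 0 ≤ α
  ae_mem : ∀ᵐ z ∂n, z ∈ latticeStrip m
  measure_zero : n {0} = 0
  integrable_min_sq : Integrable (fun z => min z.1 (z.1 ^ 2)) n
  integrable_snd : Integrable (fun z => z.2) n
  integrable {l : ℝ × ℝ} (hl : 0 ≤ l) :
    Integrable (fun z => Real.exp (-(l.1 * z.1 + l.2 * z.2)) - 1 + l.1 * z.1) n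
  eq {l : ℝ × ℝ} (hl : 0 ≤ l) : Φ l = b * l.1 - α * l.1 ^ 2 -
    ∫ z, (Real.exp (-(l.1 * z.1 + l.2 * z.2)) - 1 + l.1 * z.1) ∂n

/-- The Lévy–Khintchine representation of `Φ` in exponential coordinates. -/
structure HasExpLevyKhintchine (m : ℕ) (Φ : ℝ × ℝ → ℝ) (a : ℝ) (N : Measure (expStrip m)) :
    Prop where
  nonneg : 0 ≤ a
  measure_expOrigin : N {expOrigin m} = 0
  ae_fst_le_one : ∀ᵐ w ∂N, w.1.1 ≤ 1
  integrable {l : ℝ × ℝ} (hl : 0 ≤ l) : Integrable (fun w : expStrip m => compensated l w) N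
  eq {l : ℝ × ℝ} (hl : 0 ≤ l) :
    Φ l - l.1 * Φ (1, 0) = a * (l.1 * (1 - l.1) / 2) + ∫ w, compensated l w ∂N

variable {κ : Type*} {m : ℕ} {Φ : ℝ × ℝ → ℝ}

lemma integral_sqDistOne (ν : Measure (expStrip m)) [IsFiniteMeasure ν] :
    ∫ w, sqDistOne w ∂ν = 2 * ∫ w, compensated (0, 1) w ∂ν - ∫ w, compensated (0, 2) w ∂ν -
      ∫ w, compensated (2, 0) w ∂ν := by
  have h_int {q : ℝ × ℝ} (hq : 0 ≤ q) : Integrable (fun w : expStrip m => compensated q w) ν :=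
    ((continuous_compensated hq).comp continuous_subtype_val).integrable_of_hasCompactSupport
      (.of_compactSpace _)
  have h01 := (h_int (q := (0, 1)) ⟨le_rfl, zero_le_one⟩).const_mul 2
  have h02 := h_int (q := (0, 2)) ⟨le_rfl, zero_le_two⟩
  have h20 := h_int (q := (2, 0)) ⟨zero_le_two, le_rfl⟩
  simp only [sqDistOne_eq_compensated]
  rw [integral_sub (by exact h01.sub h02) h20, integral_sub h01 h02, integral_const_mul]

lemma exists_hasExpLevyKhintchine {l : Filter κ} [l.NeBot] {ν : κ → Measure (expStrip m)}
    [∀ k, IsFiniteMeasure (ν k)] {ε : κ → ℝ} (hε : Tendsto ε l (nhds 0))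
    (hε0 : ∀ k, 0 ≤ ε k) (hν : ∀ᶠ k in l, ∀ᵐ w ∂ν k, w.1.1 ≤ 1 + ε k)
    (hΦ : ∀ q : ℝ × ℝ, 0 ≤ q → Tendsto (fun k => ∫ w, compensated q w ∂ν k) l
      (nhds (Φ q - q.1 * Φ (1, 0)))) :
    ∃ a N, HasExpLevyKhintchine m Φ a N := by
  have hU := Ultrafilter.of_le l
  have hbdd : ∃ C, ∀ᶠ k in (Ultrafilter.of l : Filter κ), ∫ w, sqDistOne w ∂ν k ≤ C := by
    have hlim := (((hΦ (0, 1) ⟨le_rfl, zero_le_one⟩).const_mul 2).sub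
      (hΦ (0, 2) ⟨le_rfl, zero_le_two⟩)).sub (hΦ (2, 0) ⟨zero_le_two, le_rfl⟩)
    simp only [← integral_sqDistOne] at hlim
    exact ⟨_, (hlim.mono_left hU).eventually_le_const (lt_add_one _)⟩
  obtain ⟨C, hC⟩ := hbdd
  have hh : Continuous fun w : expStrip m => sqDistOne w :=
    continuous_sqDistOne.comp continuous_subtype_val
  have hnn (w : expStrip m) : 0 ≤ sqDistOne w := add_nonneg (sq_nonneg _) (sq_nonneg _)
  obtain ⟨a, N, H⟩ := exists_isLevyLimit ν hh hnn sqDistOne_eq_zero_iff hC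
  have hcont {q : ℝ × ℝ} (hq : 0 ≤ q) : Continuous fun w : expStrip m => compensated q w :=
    (continuous_compensated hq).comp continuous_subtype_val
  refine ⟨a, N, H.nonneg, H.measure_singleton, ?_, fun hq => H.integrable (hcont hq)
    (compensated_expOrigin _ m) (tendsto_compensated_div_sqDistOne _ m), fun {q} hq => ?_⟩
  · have hzero := H.ae_eq_zero hh hnn sqDistOne_eq_zero_iff
      (f := fun w : expStrip m => max (w.1.1 - 1) 0) (by fun_prop) (fun _ => le_max_right _ _)
      (by simp [expOrigin]) (hε.mono_left hU) (hU <| hν.mono fun k hk => hk.mono fun w hw =>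
        max_le (by linarith) (hε0 k))
    filter_upwards [hzero] with w hw
    linarith [max_eq_right_iff.1 hw]
  · exact tendsto_nhds_unique ((hΦ q hq).mono_left hU) (H.tendsto_integral (hcont hq)
      (compensated_expOrigin _ m) (tendsto_compensated_div_sqDistOne _ m))

variable {a L : ℝ} {N : Measure (expStrip m)}

lemma HasExpLevyKhintchine.ae_fst_pos (H : HasExpLevyKhintchine m Φ a N)
    (hΦ : ∀ t ∈ Ioc (0 : ℝ) 1, Φ (t, 0) ≤ L * t) :
    (∀ᵐ w ∂N, 0 < w.1.1) ∧ Integrable (fun w : expStrip m => (logCoord w).1 - (1 - w.1.1)) N := by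
  refine ae_pos_and_integrable_sub_log (T := fun w : expStrip m => w.1.1) (C := L - Φ (1, 0))
    (by fun_prop) (ae_of_all _ fun w => w.2.1.1) (fun t ht => ?_) fun t ht => ?_
  · simpa [compensated] using H.integrable (l := (t, 0)) ⟨ht.1.le, le_rfl⟩
  · have heq := H.eq (l := (t, 0)) ⟨ht.1.le, le_rfl⟩
    have hgauss : 0 ≤ a * (t * (1 - t) / 2) :=
      mul_nonneg H.nonneg (div_nonneg (mul_nonneg ht.1.le (by linarith [ht.2])) zero_le_two)
    simp only [compensated, Real.rpow_zero, mul_one] at heq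
    linarith [hΦ t ht]

lemma HasExpLevyKhintchine.ae_snd_pos (H : HasExpLevyKhintchine m Φ a N)
    (hΦ : ∀ t ∈ Ioc (0 : ℝ) 1, Φ (0, t) ≤ L * t) :
    (∀ᵐ w ∂N, 0 < w.1.2) ∧ Integrable (fun w : expStrip m => (logCoord w).2 - (1 - w.1.2)) N := by
  have hone : Integrable (fun w : expStrip m => 1 - w.1.2) N := by
    simpa [compensated] using H.integrable (l := (0, 1)) ⟨le_rfl, zero_le_one⟩
  have hpow {t : ℝ} (ht : t ∈ Ioc (0 : ℝ) 1) :
      Integrable (fun w : expStrip m => 1 - w.1.2 ^ t) N := by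
    simpa [compensated] using H.integrable (l := (0, t)) ⟨le_rfl, ht.1.le⟩
  have hnonneg (w : expStrip m) : 0 ≤ w.1.2 := by
    obtain hw | ⟨n, hn⟩ := w.2.2
    exacts [hw.ge, hn ▸ (Real.exp_pos _).le]
  refine ae_pos_and_integrable_sub_log (T := fun w : expStrip m => w.1.2) (C := L - Φ (0, 1))
    (by fun_prop) (ae_of_all _ hnonneg) (fun t ht => (hpow ht).sub (hone.const_mul t))
    fun t ht => ?_
  rw [integral_sub (hpow ht) (hone.const_mul t), integral_const_mul]
  have h1 := H.eq (l := (0, 1)) ⟨le_rfl, zero_le_one⟩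
  have h2 := H.eq (l := (0, t)) ⟨le_rfl, ht.1.le⟩
  simp only [compensated, Real.rpow_zero, Real.rpow_one, one_mul, zero_mul, sub_zero, mul_zero,
    zero_div, zero_add] at h1 h2
  rw [← h1, ← h2]
  linarith [hΦ t ht]

/-- The Lévy measure in the original coordinates. -/
def levyMeasure (N : Measure (expStrip m)) : Measure (ℝ × ℝ) :=
  N.map fun w : expStrip m => logCoord w

lemma measurable_logCoord_expStrip : Measurable fun w : expStrip m => logCoord w :=
  measurable_logCoord.comp measurable_subtype_coe

lemma HasExpLevyKhintchine.ae_levyMeasure_mem (H : HasExpLevyKhintchine m Φ a N)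
    (hy : ∀ᵐ w ∂N, 0 < w.1.2) : ∀ᵐ z ∂levyMeasure N, z ∈ latticeStrip m := by
  refine (ae_map_iff measurable_logCoord_expStrip.aemeasurable (measurableSet_latticeStrip m)).2 ?_
  filter_upwards [H.ae_fst_le_one, hy] with w h1 h2
  exact logCoord_mem_latticeStrip w.2 h1 h2

lemma HasExpLevyKhintchine.levyMeasure_zero (H : HasExpLevyKhintchine m Φ a N)
    (hx : ∀ᵐ w ∂N, 0 < w.1.1) (hy : ∀ᵐ w ∂N, 0 < w.1.2) : levyMeasure N {0} = 0 := by
  rw [levyMeasure, Measure.map_apply measurable_logCoord_expStrip (measurableSet_singleton 0),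
    measure_eq_zero_iff_ae_notMem]
  filter_upwards [hx, hy, measure_eq_zero_iff_ae_notMem.1 H.measure_expOrigin] with w h1 h2 hw hw0
  exact hw (Subtype.ext ((logCoord_eq_zero_iff h1 h2).1 hw0))

lemma HasExpLevyKhintchine.integrable_min_sq (H : HasExpLevyKhintchine m Φ a N)
    (hx : ∀ᵐ w ∂N, 0 < w.1.1)
    (hlog : Integrable (fun w : expStrip m => (logCoord w).1 - (1 - w.1.1)) N) :
    Integrable (fun z => min z.1 (z.1 ^ 2)) (levyMeasure N) := by
  rw [levyMeasure, integrable_map_measure (by fun_prop) measurable_logCoord_expStrip.aemeasurable]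
  have hmeas : Measurable fun z : ℝ × ℝ => min z.1 (z.1 ^ 2) := by fun_prop
  refine (hlog.const_mul 4).mono' (hmeas.comp measurable_logCoord_expStrip).aestronglyMeasurable ?_
  filter_upwards [hx, H.ae_fst_le_one] with w h0 h1
  have hnonneg : 0 ≤ (logCoord w).1 := neg_nonneg.2 (Real.log_nonpos h0.le h1)
  have hexp : Real.exp (-(logCoord w).1) = w.1.1 := by rw [logCoord, neg_neg, Real.exp_log h0]
  rw [Function.comp_apply, Real.norm_of_nonneg (le_min hnonneg (sq_nonneg _))]
  simpa only [hexp] using min_sq_le_four_mul (logCoord w).1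

lemma HasExpLevyKhintchine.integrable_snd (H : HasExpLevyKhintchine m Φ a N)
    (hlog : Integrable (fun w : expStrip m => (logCoord w).2 - (1 - w.1.2)) N) :
    Integrable (fun z => z.2) (levyMeasure N) := by
  rw [levyMeasure, integrable_map_measure (by fun_prop) measurable_logCoord_expStrip.aemeasurable]
  refine (hlog.add (H.integrable (l := (0, 1)) ⟨le_rfl, zero_le_one⟩)).congr
    (.of_forall fun w => ?_)
  simp [compensated]

lemma HasExpLevyKhintchine.hasLevyKhintchine (H : HasExpLevyKhintchine m Φ a N)
    (h1 : ∀ t ∈ Ioc (0 : ℝ) 1, Φ (t, 0) ≤ L * t) (h2 : ∀ t ∈ Ioc (0 : ℝ) 1, Φ (0, t) ≤ L * t) :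
    HasLevyKhintchine m Φ (Φ (1, 0) + a / 2 + ∫ w : expStrip m, ((logCoord w).1 - (1 - w.1.1)) ∂N)
      (a / 2) (levyMeasure N) := by
  obtain ⟨hx, hlogx⟩ := H.ae_fst_pos h1
  obtain ⟨hy, hlogy⟩ := H.ae_snd_pos h2
  have hcomp (l : ℝ × ℝ) : (fun w : expStrip m => Real.exp (-(l.1 * (logCoord w).1 +
      l.2 * (logCoord w).2)) - 1 + l.1 * (logCoord w).1) =ᵐ[N] fun w =>
        l.1 * ((logCoord w).1 - (1 - w.1.1)) - compensated l w := by
    filter_upwards [hx, hy] with w hwx hwy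
    rw [exp_neg_logCoord hwx hwy, compensated]
    ring
  refine ⟨div_nonneg H.nonneg zero_le_two, H.ae_levyMeasure_mem hy, H.levyMeasure_zero hx hy,
    H.integrable_min_sq hx hlogx, H.integrable_snd hlogy, fun {l} hl => ?_, fun {l} hl => ?_⟩
  · rw [levyMeasure, integrable_map_measure (by fun_prop) measurable_logCoord_expStrip.aemeasurable]
    exact (integrable_congr (hcomp l)).2 ((hlogx.const_mul l.1).sub (H.integrable hl))
  · rw [levyMeasure, integral_map measurable_logCoord_expStrip.aemeasurable (by fun_prop),
      integral_congr_ae (hcomp l), integral_sub (hlogx.const_mul l.1) (H.integrable hl),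
      integral_const_mul]
    linear_combination H.eq hl

lemma exists_hasLevyKhintchine {l : Filter κ} [l.NeBot] {π : κ → Measure (ℝ × ℝ)}
    [∀ k, IsFiniteMeasure (π k)] {δ : κ → ℝ} (hδ : Tendsto δ l (nhds 0)) (hδ0 : ∀ k, 0 ≤ δ k)
    (hfst : ∀ k, ∀ᵐ z ∂π k, -δ k ≤ z.1)
    (hsnd : ∀ k, ∀ᵐ z : ℝ × ℝ ∂π k, ∃ j : ℤ, -(m : ℤ) ≤ j ∧ z.2 = j)
    (hΦ : ∀ q : ℝ × ℝ, 0 ≤ q → Tendsto (fun k => laplaceExponent (π k) q) l (nhds (Φ q)))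
    (hL : ∀ t ∈ Ioc (0 : ℝ) 1, Φ (t, 0) ≤ L * t ∧ Φ (0, t) ≤ L * t) :
    ∃ b α n, HasLevyKhintchine m Φ b α n := by
  have hε : Tendsto (fun k => Real.exp (δ k) - 1) l (nhds 0) := by
    simpa using ((Real.continuous_exp.tendsto 0).comp hδ).sub_const 1
  have hmem : ∀ᶠ k in l, ∀ᵐ z ∂π k, expCoord z ∈ expStrip m := by
    filter_upwards [hδ.eventually_le_const one_pos] with k hk
    filter_upwards [hfst k, hsnd k] with z hz hz'
    exact expCoord_mem_expStrip (by linarith) hz'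
  have hfst' (k : κ) : ∀ᵐ w : expStrip m ∂expMeasure m (π k), w.1.1 ≤ 1 + (Real.exp (δ k) - 1) := by
    refine ae_expMeasure (p := fun w => w.1 ≤ 1 + (Real.exp (δ k) - 1))
      (measurableSet_le measurable_fst measurable_const) ?_
    filter_upwards [hfst k] with z hz
    rw [add_sub_cancel]
    exact Real.exp_le_exp.2 (by linarith)
  have hlim (q : ℝ × ℝ) (hq : 0 ≤ q) : Tendsto
      (fun k => ∫ w, compensated q w ∂expMeasure m (π k)) l (nhds (Φ q - q.1 * Φ (1, 0))) := by
    refine ((hΦ q hq).sub ((hΦ (1, 0) ⟨zero_le_one, le_rfl⟩).const_mul q.1)).congr' ?_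
    filter_upwards [hmem] with k hk
    exact (integral_compensated_expMeasure hk hq).symm
  obtain ⟨a, N, H⟩ := exists_hasExpLevyKhintchine hε
    (fun k => sub_nonneg.2 (Real.one_le_exp (hδ0 k))) (.of_forall hfst') hlim
  exact ⟨_, _, _, H.hasLevyKhintchine (fun t ht => (hL t ht).1) fun t ht => (hL t ht).2⟩

variable {b α : ℝ} {n : Measure (ℝ × ℝ)}

lemma HasLevyKhintchine.sigmaFinite (H : HasLevyKhintchine m Φ b α n) : SigmaFinite n := by
  refine sigmaFinite_of_integrable_of_ae_ne_zero (H.integrable_min_sq.add H.integrable_snd.abs) ?_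
  filter_upwards [H.ae_mem, measure_eq_zero_iff_ae_notMem.1 H.measure_zero] with z hz hz0 h
  have hmin : 0 ≤ min z.1 (z.1 ^ 2) := le_min hz.1 (sq_nonneg _)
  obtain ⟨h1, h2⟩ := (add_eq_zero_iff_of_nonneg hmin (abs_nonneg z.2)).1 h
  refine hz0 (Prod.ext ?_ (abs_eq_zero.1 h2))
  rcases min_choice z.1 (z.1 ^ 2) with h' | h'
  · exact h'.symm.trans h1
  · exact pow_eq_zero_iff two_ne_zero |>.1 (h'.symm.trans h1)

lemma tendsto_exp_sub_one_add_div_atTop {x : ℝ} (hx : 0 ≤ x) :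
    Tendsto (fun t : ℝ => (Real.exp (-(t * x)) - 1 + t * x) / t) atTop (nhds x) := by
  have hbdd : Tendsto (fun t : ℝ => (Real.exp (-(t * x)) - 1) / t) atTop (nhds 0) := by
    refine squeeze_zero_norm' ?_ tendsto_inv_atTop_zero
    filter_upwards [eventually_gt_atTop 0] with t ht
    have hle : Real.exp (-(t * x)) ≤ 1 := Real.exp_le_one_iff.2 (by nlinarith)
    rw [norm_div, Real.norm_of_nonneg ht.le, div_eq_mul_inv, Real.norm_eq_abs]
    refine mul_le_of_le_one_left (inv_nonneg.2 ht.le) (abs_le.2 ⟨?_, ?_⟩) <;>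
      linarith [Real.exp_pos (-(t * x))]
  refine (by simpa using hbdd.add_const x : Tendsto _ _ (nhds x)).congr' ?_
  filter_upwards [eventually_ne_atTop 0] with t ht
  field_simp

lemma HasLevyKhintchine.fst_axis (H : HasLevyKhintchine m Φ b α n)
    (hΦ : ∀ t, 0 ≤ t → 0 ≤ Φ (t, 0)) {t : ℝ} (ht : 0 ≤ t) :
    Integrable (fun z => Real.exp (-(t * z.1)) - 1 + t * z.1) n ∧
      α * t ^ 2 + ∫ z, (Real.exp (-(t * z.1)) - 1 + t * z.1) ∂n ≤ b * t := by
  have h_int := H.integrable (l := (t, 0)) ⟨ht, le_rfl⟩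
  have heq := H.eq (l := (t, 0)) ⟨ht, le_rfl⟩
  simp only [zero_mul, add_zero] at h_int heq
  exact ⟨h_int, by linarith [hΦ t ht]⟩

lemma exp_neg_sub_one_add_nonneg (x : ℝ) : 0 ≤ Real.exp (-x) - 1 + x := by
  linarith [Real.add_one_le_exp (-x)]

lemma HasLevyKhintchine.alpha_eq_zero (H : HasLevyKhintchine m Φ b α n)
    (hΦ : ∀ t, 0 ≤ t → 0 ≤ Φ (t, 0)) : α = 0 := by
  refine le_antisymm (ge_of_tendsto (tendsto_const_nhds.div_atTop tendsto_id : Tendsto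
    (fun t : ℝ => b / t) atTop (nhds 0)) ?_) H.nonneg
  filter_upwards [eventually_gt_atTop 0] with t ht
  have hle := (H.fst_axis hΦ ht.le).2
  have h_int : 0 ≤ ∫ z, (Real.exp (-(t * z.1)) - 1 + t * z.1) ∂n :=
    integral_nonneg fun z => exp_neg_sub_one_add_nonneg _
  rw [le_div_iff₀ ht]
  nlinarith

lemma HasLevyKhintchine.integrable_fst (H : HasLevyKhintchine m Φ b α n)
    (hΦ : ∀ t, 0 ≤ t → 0 ≤ Φ (t, 0)) : Integrable (fun z => z.1) n ∧ ∫ z, z.1 ∂n ≤ b := by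
  have hfst : 0 ≤ᵐ[n] fun z => z.1 := H.ae_mem.mono fun z hz => hz.1
  have hnn (t : ℝ) (z : ℝ × ℝ) := exp_neg_sub_one_add_nonneg (t * z.1)
  have hdrift {t : ℝ} (ht : 0 ≤ t) :
      ∫ z, (Real.exp (-(t * z.1)) - 1 + t * z.1) ∂n ≤ b * t := by
    simpa [H.alpha_eq_zero hΦ] using (H.fst_axis hΦ ht).2
  have hfatou : ∫⁻ z, ENNReal.ofReal z.1 ∂n ≤ ENNReal.ofReal b := by
    have hlim : ∀ᵐ z ∂n, Tendsto (fun t : ℝ =>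
        ENNReal.ofReal ((Real.exp (-(t * z.1)) - 1 + t * z.1) / t)) atTop
        (nhds (ENNReal.ofReal z.1)) := by
      filter_upwards [hfst] with z hz
      exact ENNReal.tendsto_ofReal (tendsto_exp_sub_one_add_div_atTop hz)
    refine lintegral_le_ofReal_of_tendsto (fun t => by fun_prop) ?_ hlim
    filter_upwards [eventually_gt_atTop 0] with t ht
    refine ⟨(H.fst_axis hΦ ht.le).1.div_const t,
      .of_forall fun z => div_nonneg (hnn t z) ht.le, ?_⟩
    rw [integral_div, div_le_iff₀ ht]
    linarith [hdrift ht.le]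
  have hb : 0 ≤ b := by
    have hnn₁ : 0 ≤ ∫ z, (Real.exp (-(1 * z.1)) - 1 + 1 * z.1) ∂n := integral_nonneg (hnn 1)
    linarith [hdrift zero_le_one]
  have h_int := integrable_of_lintegral_ofReal_le (by fun_prop) hfst hfatou
  refine ⟨h_int, (ENNReal.ofReal_le_ofReal_iff hb).1 ?_⟩
  rwa [ofReal_integral_eq_lintegral_ofReal h_int hfst]

lemma HasLevyKhintchine.eq_drift_add_laplaceExponent (H : HasLevyKhintchine m Φ b α n)
    (hΦ : ∀ t, 0 ≤ t → 0 ≤ Φ (t, 0)) {l : ℝ × ℝ} (hl : 0 ≤ l) :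
    Φ l = (b - ∫ z, z.1 ∂n) * l.1 + laplaceExponent n l := by
  have hsplit : laplaceExponent n l = l.1 * ∫ z, z.1 ∂n -
      ∫ z, (Real.exp (-(l.1 * z.1 + l.2 * z.2)) - 1 + l.1 * z.1) ∂n := by
    rw [laplaceExponent, ← integral_const_mul,
      ← integral_sub ((H.integrable_fst hΦ).1.const_mul _) (H.integrable hl)]
    congr with z
    ring
  rw [H.eq hl, H.alpha_eq_zero hΦ, hsplit]
  ring

lemma latticeStrip_zero : latticeStrip 0 = Mset := by
  ext z
  refine and_congr_right fun _ => ⟨fun ⟨j, hj, hz⟩ => ?_, fun ⟨i, hz⟩ => ⟨i, by simp, by simp [hz]⟩⟩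
  lift j to ℕ using by simpa using hj
  exact ⟨j, by simpa using hz⟩

lemma latticeStrip_one : latticeStrip 1 = Mm1set := rfl

lemma exists_branchingMechanism {Φ₁ Φ₂ : ℝ × ℝ → ℝ} {b₁ b₂ α₁ α₂ : ℝ} {n₁ n₂ : Measure (ℝ × ℝ)}
    (H₁ : HasLevyKhintchine 0 Φ₁ b₁ α₁ n₁) (H₂ : HasLevyKhintchine 1 Φ₂ b₂ α₂ n₂)
    (hΦ₂ : ∀ t, 0 ≤ t → 0 ≤ Φ₂ (t, 0)) :
    ∃ B : BranchingMechanism, ∀ l : ℝ × ℝ, 0 ≤ l → Φ₁ l = mPhi1 B l ∧ Φ₂ l = mPhi2 B l := by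
  obtain ⟨hfst, hdrift⟩ := H₂.integrable_fst hΦ₂
  refine ⟨{ a11 := -b₁, a21 := b₂ - ∫ z, z.1 ∂n₂, alpha := α₁, n1 := n₁, n2 := n₂
            a21_nonneg := sub_nonneg.2 hdrift
            alpha_nonneg := H₁.nonneg
            n1_sigmaFinite := H₁.sigmaFinite
            n2_sigmaFinite := H₂.sigmaFinite
            n1_supp := latticeStrip_zero ▸ H₁.ae_mem
            n2_supp := latticeStrip_one ▸ H₂.ae_mem
            n1_zero := H₁.measure_zero
            n2_zero := H₂.measure_zero
            n2_neg1 := ?_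
            n1_moment := (H₁.integrable_min_sq.add H₁.integrable_snd).lintegral_lt_top.ne
            n2_moment := (hfst.add H₂.integrable_snd.abs).lintegral_lt_top.ne },
    fun l hl => ⟨?_, ?_⟩⟩
  · refine ((measure_mono fun z hz => ?_).trans_lt
      (H₂.integrable_snd.measure_norm_ge_lt_top one_pos)).ne
    simp [show z.2 = -1 from hz]
  · rw [H₁.eq hl, mPhi1, neg_neg]
  · exact H₂.eq_drift_add_laplaceExponent hΦ₂ hl

end LevyKhintchine

section Offspring

/-- The measure with intensity `G` and law `p` of the displacements `((i₁ - e₁)/r, i₂ - e₂)` caused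
by replacing an individual of type `e` by `i₁` and `i₂` individuals of the two types, when the mass
of the first type is measured in units of `1/r`. -/
def displacementMeasure (G r : ℝ) (e : ℕ × ℕ) (p : ℕ × ℕ → ℝ) : Measure (ℝ × ℝ) :=
  Measure.sum fun i : ℕ × ℕ =>
    ENNReal.ofReal (G * p i) • Measure.dirac (((i.1 : ℝ) - e.1) / r, (i.2 : ℝ) - e.2)

variable {G r : ℝ} {e : ℕ × ℕ} {p : ℕ × ℕ → ℝ}

lemma isFiniteMeasure_displacementMeasure (hp : Summable p) :
    IsFiniteMeasure (displacementMeasure G r e p) := by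
  refine ⟨?_⟩
  rw [displacementMeasure, Measure.sum_apply _ MeasurableSet.univ]
  simpa using (hp.mul_left G).tsum_ofReal_lt_top

lemma ae_displacementMeasure {P : ℝ × ℝ → Prop}
    (hP : ∀ i : ℕ × ℕ, P (((i.1 : ℝ) - e.1) / r, (i.2 : ℝ) - e.2)) :
    ∀ᵐ z ∂displacementMeasure G r e p, P z := by
  refine Measure.ae_sum_iff.2 fun i => Measure.ae_smul_measure ?_ _
  rw [ae_dirac_eq]
  exact hP i

lemma hasSum_pgf2 (hp0 : ∀ i, 0 ≤ p i) (hp : Summable p) {s : ℝ × ℝ} (hs0 : 0 ≤ s) (hs1 : s ≤ 1) :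
    HasSum (fun i : ℕ × ℕ => p i * s.1 ^ i.1 * s.2 ^ i.2) (pgf2 p s) := by
  refine (hp.of_nonneg_of_le (fun i => ?_) fun i => ?_).hasSum
  · exact mul_nonneg (mul_nonneg (hp0 i) (pow_nonneg hs0.1 _)) (pow_nonneg hs0.2 _)
  · rw [mul_assoc]
    exact mul_le_of_le_one_right (hp0 i)
      (mul_le_one₀ (pow_le_one₀ hs0.1 hs1.1) (pow_nonneg hs0.2 _) (pow_le_one₀ hs0.2 hs1.2))

lemma laplaceExponent_displacementMeasure (hG : 0 ≤ G) (hr : 0 ≤ r) (hp0 : ∀ i, 0 ≤ p i)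
    (hp : HasSum p 1) {l : ℝ × ℝ} (hl : 0 ≤ l) :
    laplaceExponent (displacementMeasure G r e p) l =
      G * (1 - Real.exp (l.1 * e.1 / r + l.2 * e.2) *
        pgf2 p (Real.exp (-l.1 / r), Real.exp (-l.2))) := by
  have hs1 : (Real.exp (-l.1 / r), Real.exp (-l.2)) ≤ 1 :=
    ⟨Real.exp_le_one_iff.2 (div_nonpos_of_nonpos_of_nonneg (neg_nonpos.2 hl.1) hr),
      Real.exp_le_one_iff.2 (neg_nonpos.2 hl.2)⟩
  have hpgf := hasSum_pgf2 hp0 hp.summable ⟨(Real.exp_pos _).le, (Real.exp_pos _).le⟩ hs1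
  rw [laplaceExponent, displacementMeasure, integral_sum_dirac fun i => ENNReal.ofReal_ne_top]
  refine (((hp.sub (hpgf.mul_left (Real.exp (l.1 * e.1 / r + l.2 * e.2)))).mul_left G).congr_fun
    fun i => ?_).tsum_eq
  have hexp : Real.exp (-(l.1 * ((i.1 - e.1) / r) + l.2 * (i.2 - e.2))) =
      Real.exp (l.1 * e.1 / r + l.2 * e.2) *
        (Real.exp (-l.1 / r) ^ i.1 * Real.exp (-l.2) ^ i.2) := by
    simp only [← Real.exp_nat_mul, ← Real.exp_add]
    congr 1
    ring
  rw [ENNReal.toReal_ofReal (mul_nonneg hG (hp0 i)), smul_eq_mul, hexp]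
  ring

variable {γ : ℕ → ℝ} {P : ℕ → ℕ × ℕ → ℝ} {Φ : ℝ × ℝ → ℝ}

lemma exp_mul_Phik1 (hγ : ∀ k, 0 ≤ γ k) (hP0 : ∀ k i, 0 ≤ P k i) (hP : ∀ k, HasSum (P k) 1) (k : ℕ)
    {l : ℝ × ℝ} (hl : 0 ≤ l) :
    Real.exp (l.1 / (k + 1)) * Phik1 γ (fun k => pgf2 (P k)) k l =
      laplaceExponent (displacementMeasure ((k + 1) * γ k) (k + 1) (1, 0) (P k)) l := by
  have hk : (0 : ℝ) ≤ k + 1 := by positivity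
  rw [laplaceExponent_displacementMeasure (mul_nonneg hk (hγ k)) hk (hP0 k) (hP k) hl, Phik1]
  have hcancel : Real.exp (l.1 / (k + 1)) * Real.exp (-l.1 / (k + 1)) = 1 := by
    rw [← Real.exp_add, neg_div, add_neg_cancel, Real.exp_zero]
  simp only [Nat.cast_one, Nat.cast_zero, mul_one, mul_zero, add_zero]
  linear_combination (k + 1) * γ k * hcancel

lemma exp_mul_Phik2 (hγ : ∀ k, 0 ≤ γ k) (hP0 : ∀ k i, 0 ≤ P k i) (hP : ∀ k, HasSum (P k) 1) (k : ℕ)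
    {l : ℝ × ℝ} (hl : 0 ≤ l) :
    Real.exp l.2 * Phik2 γ (fun k => pgf2 (P k)) k l =
      laplaceExponent (displacementMeasure (γ k) (k + 1) (0, 1) (P k)) l := by
  rw [laplaceExponent_displacementMeasure (hγ k) (by positivity) (hP0 k) (hP k) hl, Phik2]
  have hcancel : Real.exp l.2 * Real.exp (-l.2) = 1 := by
    rw [← Real.exp_add, add_neg_cancel, Real.exp_zero]
  simp only [Nat.cast_one, Nat.cast_zero, mul_one, mul_zero, zero_div, zero_add]
  linear_combination γ k * hcancel

lemma exists_hasLevyKhintchine_of_tendsto_Phik1 (hγ : ∀ k, 0 ≤ γ k) (hP0 : ∀ k i, 0 ≤ P k i)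
    (hP : ∀ k, HasSum (P k) 1)
    (hΦ : ∀ l : ℝ × ℝ, 0 ≤ l →
      Tendsto (fun k => Phik1 γ (fun k => pgf2 (P k)) k l) atTop (nhds (Φ l)))
    {L : ℝ} (hL : ∀ t ∈ Ioc (0 : ℝ) 1, Φ (t, 0) ≤ L * t ∧ Φ (0, t) ≤ L * t) :
    ∃ b α n, HasLevyKhintchine 0 Φ b α n := by
  have hfin (k : ℕ) := isFiniteMeasure_displacementMeasure (G := (k + 1) * γ k) (r := k + 1)
    (e := (1, 0)) (hP k).summable
  refine exists_hasLevyKhintchine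
    (π := fun k => displacementMeasure ((k + 1) * γ k) (k + 1) (1, 0) (P k))
    tendsto_one_div_add_atTop_nhds_zero_nat (fun k => by positivity)
    (fun k => ae_displacementMeasure fun i => ?_)
    (fun k => ae_displacementMeasure fun i => ⟨i.2, by simp, by simp⟩) (fun l hl => ?_) hL
  · rw [← neg_div]
    exact div_le_div_of_nonneg_right (by simp) (by positivity)
  · have hexp : Tendsto (fun k : ℕ => Real.exp (l.1 / (k + 1))) atTop (nhds 1) := by
      have := tendsto_one_div_add_atTop_nhds_zero_nat.const_mul l.1
      simpa [div_eq_mul_inv, Function.comp_def] using (Real.continuous_exp.tendsto _).comp this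
    simpa only [one_mul, exp_mul_Phik1 hγ hP0 hP _ hl] using hexp.mul (hΦ l hl)

lemma exists_hasLevyKhintchine_of_tendsto_Phik2 (hγ : ∀ k, 0 ≤ γ k) (hP0 : ∀ k i, 0 ≤ P k i)
    (hP : ∀ k, HasSum (P k) 1)
    (hΦ : ∀ l : ℝ × ℝ, 0 ≤ l →
      Tendsto (fun k => Real.exp l.2 * Phik2 γ (fun k => pgf2 (P k)) k l) atTop (nhds (Φ l)))
    {L : ℝ} (hL : ∀ t ∈ Ioc (0 : ℝ) 1, Φ (t, 0) ≤ L * t ∧ Φ (0, t) ≤ L * t) :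
    ∃ b α n, HasLevyKhintchine 1 Φ b α n := by
  have hfin (k : ℕ) := isFiniteMeasure_displacementMeasure (G := γ k) (r := k + 1) (e := (0, 1))
    (hP k).summable
  refine exists_hasLevyKhintchine (l := atTop)
    (π := fun k => displacementMeasure (γ k) (k + 1) (0, 1) (P k)) (tendsto_const_nhds (x := 0))
    (fun _ => le_rfl) (fun k => ae_displacementMeasure fun i => ?_)
    (fun k => ae_displacementMeasure fun i => ⟨i.2 - 1, by omega, by simp⟩) (fun l hl => ?_) hL
  · simp only [Nat.cast_zero, sub_zero, neg_zero]
    positivity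
  · simpa only [exp_mul_Phik2 hγ hP0 hP _ hl] using hΦ l hl

lemma nonneg_of_tendsto_Phik2 (hγ : ∀ k, 0 ≤ γ k) (hP0 : ∀ k i, 0 ≤ P k i)
    (hP : ∀ k, HasSum (P k) 1) {t : ℝ} (ht : 0 ≤ t) {x : ℝ}
    (hx : Tendsto (fun k => Real.exp 0 * Phik2 γ (fun k => pgf2 (P k)) k (t, 0)) atTop (nhds x)) :
    0 ≤ x := by
  refine ge_of_tendsto' hx fun k => ?_
  rw [exp_mul_Phik2 hγ hP0 hP k (l := (t, 0)) ⟨ht, le_rfl⟩, laplaceExponent]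
  refine integral_nonneg_of_ae (ae_displacementMeasure fun i => ?_)
  simp only [Nat.cast_zero, sub_zero, zero_mul, add_zero]
  exact sub_nonneg.2 (Real.exp_le_one_iff.2 (neg_nonpos.2 (by positivity)))

lemma pgf2_one (hp : HasSum p 1) : pgf2 p (1, 1) = 1 := by
  simpa only [pgf2, one_pow, mul_one] using hp.tsum_eq

lemma Phik1_zero (hP : ∀ k, HasSum (P k) 1) (k : ℕ) : Phik1 γ (fun k => pgf2 (P k)) k 0 = 0 := by
  simp [Phik1, pgf2_one (hP k)]

lemma Phik2_zero (hP : ∀ k, HasSum (P k) 1) (k : ℕ) : Phik2 γ (fun k => pgf2 (P k)) k 0 = 0 := by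
  simp [Phik2, pgf2_one (hP k)]

end Offspring

lemma axes_le_mul_of_tendsto_of_lipschitzOnWith {κ : Type*} {l : Filter κ} [l.NeBot]
    {F : κ → ℝ × ℝ → ℝ} {Φ : ℝ × ℝ → ℝ} {L : NNReal}
    (hF : ∀ k, LipschitzOnWith L (F k) (Icc 0 1)) (hF0 : ∀ k, F k 0 = 0)
    (hlim : ∀ q : ℝ × ℝ, 0 ≤ q.1 → 0 ≤ q.2 → Tendsto (fun k => F k q) l (nhds (Φ q))) :
    ∀ t ∈ Ioc (0 : ℝ) 1, Φ (t, 0) ≤ L * t ∧ Φ (0, t) ≤ L * t := by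
  have hnorm {q : ℝ × ℝ} (hq : q ∈ Icc 0 1) : Φ q ≤ L * ‖q‖ := by
    refine le_of_tendsto' (hlim q hq.1.1 hq.1.2) fun k => ?_
    simpa [hF0] using (le_abs_self _).trans ((hF k).dist_le_mul q hq 0 ⟨le_rfl, zero_le_one⟩)
  refine fun t ht => ⟨?_, ?_⟩
  · simpa [Prod.norm_def, abs_of_pos ht.1, ht.1.le] using
      hnorm (q := (t, 0)) ⟨⟨ht.1.le, le_rfl⟩, ⟨ht.2, zero_le_one⟩⟩
  · simpa [Prod.norm_def, abs_of_pos ht.1, ht.1.le] using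
      hnorm (q := (0, t)) ⟨⟨le_rfl, ht.1.le⟩, ⟨zero_le_one, ht.2⟩⟩

theorem limit_representation_two_type_general
    (γ : ℕ → ℝ) (p1 p2 : ℕ → ℕ × ℕ → ℝ) (Φ1 Φ2 : ℝ × ℝ → ℝ)
    (hp1_nonneg : ∀ k i, 0 ≤ p1 k i) (hp1_sum : ∀ k, HasSum (p1 k) 1)
    (hp2_nonneg : ∀ k i, 0 ≤ p2 k i) (hp2_sum : ∀ k, HasSum (p2 k) 1)
    (hγ : ∀ k, 0 ≤ γ k) {L1 L2 : ℝ}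
    (hΦ1_le : ∀ t ∈ Ioc (0 : ℝ) 1, Φ1 (t, 0) ≤ L1 * t ∧ Φ1 (0, t) ≤ L1 * t)
    (hΦ1_lim : ∀ l : ℝ × ℝ, 0 ≤ l.1 → 0 ≤ l.2 →
      Tendsto (fun k => Phik1 γ (fun k => pgf2 (p1 k)) k l) atTop (nhds (Φ1 l)))
    (hΦ2_le : ∀ t ∈ Ioc (0 : ℝ) 1, Φ2 (t, 0) ≤ L2 * t ∧ Φ2 (0, t) ≤ L2 * t)
    (hΦ2_lim : ∀ l : ℝ × ℝ, 0 ≤ l.1 → 0 ≤ l.2 →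
      Tendsto (fun k => Real.exp l.2 * Phik2 γ (fun k => pgf2 (p2 k)) k l) atTop (nhds (Φ2 l))) :
    ∃ B : BranchingMechanism, ∀ l : ℝ × ℝ, 0 ≤ l.1 → 0 ≤ l.2 →
      Φ1 l = mPhi1 B l ∧ Φ2 l = mPhi2 B l := by
  obtain ⟨b₁, α₁, n₁, H₁⟩ := exists_hasLevyKhintchine_of_tendsto_Phik1 hγ hp1_nonneg hp1_sum
    (fun l hl => hΦ1_lim l hl.1 hl.2) hΦ1_le
  obtain ⟨b₂, α₂, n₂, H₂⟩ := exists_hasLevyKhintchine_of_tendsto_Phik2 hγ hp2_nonneg hp2_sum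
    (fun l hl => hΦ2_lim l hl.1 hl.2) hΦ2_le
  have hΦ2_nonneg (t : ℝ) (ht : 0 ≤ t) : 0 ≤ Φ2 (t, 0) :=
    nonneg_of_tendsto_Phik2 hγ hp2_nonneg hp2_sum ht (hΦ2_lim (t, 0) ht le_rfl)
  obtain ⟨B, hB⟩ := exists_branchingMechanism H₁ H₂ hΦ2_nonneg
  exact ⟨B, fun l hl₁ hl₂ => hB l ⟨hl₁, hl₂⟩⟩

/-- Under conditions (A), (C), (D), the pointwise limits `Φ₁` of
`Φ_{k,1}` and `Φ₂` of `e^{λ₂}Φ_{k,2}` have the Lévy–Khintchine type representations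
of a branching mechanism. -/
theorem limit_representation_two_type
    (γ : ℕ → ℝ) (p1 p2 : ℕ → ℕ × ℕ → ℝ) (Φ1 Φ2 : ℝ × ℝ → ℝ)
    (hp1_nonneg : ∀ k i, 0 ≤ p1 k i) (hp1_sum : ∀ k, HasSum (p1 k) 1)
    (hp2_nonneg : ∀ k i, 0 ≤ p2 k i) (hp2_sum : ∀ k, HasSum (p2 k) 1)
    (hγ_pos : ∀ k, 0 < γ k)
    -- Condition (A)
    (hA : Tendsto γ atTop atTop)
    -- Condition (C): uniform Lipschitz on bounded rectangles …
    (hC_lip : ∀ R : ℝ, 0 ≤ R → ∃ L : NNReal, ∀ k,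
      LipschitzOnWith L (Phik1 γ (fun k => pgf2 (p1 k)) k) (Icc ((0:ℝ),(0:ℝ)) (R,R)))
    -- … and pointwise convergence of `Φ_{k,1}` to the continuous function `Φ₁`
    (hΦ1_cont : ContinuousOn Φ1 {l : ℝ × ℝ | 0 ≤ l.1 ∧ 0 ≤ l.2})
    (hC_conv : ∀ l : ℝ × ℝ, 0 ≤ l.1 → 0 ≤ l.2 →
      Tendsto (fun k => Phik1 γ (fun k => pgf2 (p1 k)) k l) atTop (nhds (Φ1 l)))
    -- Condition (D): uniform Lipschitz on bounded rectangles …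
    (hD_lip : ∀ R : ℝ, 0 ≤ R → ∃ L : NNReal, ∀ k,
      LipschitzOnWith L (fun l : ℝ × ℝ => Real.exp l.2 * Phik2 γ (fun k => pgf2 (p2 k)) k l)
        (Icc ((0:ℝ),(0:ℝ)) (R,R)))
    -- … and pointwise convergence of `e^{λ₂}Φ_{k,2}` to the continuous function `Φ₂`
    (hΦ2_cont : ContinuousOn Φ2 {l : ℝ × ℝ | 0 ≤ l.1 ∧ 0 ≤ l.2})
    (hD_conv : ∀ l : ℝ × ℝ, 0 ≤ l.1 → 0 ≤ l.2 →
      Tendsto (fun k => Real.exp l.2 * Phik2 γ (fun k => pgf2 (p2 k)) k l) atTop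
        (nhds (Φ2 l))) :
    ∃ B : BranchingMechanism, ∀ l : ℝ × ℝ, 0 ≤ l.1 → 0 ≤ l.2 →
      Φ1 l = mPhi1 B l ∧ Φ2 l = mPhi2 B l := by
  obtain ⟨L₁, hL₁⟩ := hC_lip 1 zero_le_one
  obtain ⟨L₂, hL₂⟩ := hD_lip 1 zero_le_one
  exact limit_representation_two_type_general γ p1 p2 Φ1 Φ2 hp1_nonneg hp1_sum hp2_nonneg hp2_sum
    (fun k => (hγ_pos k).le)
    (axes_le_mul_of_tendsto_of_lipschitzOnWith hL₁ (Phik1_zero hp1_sum) hC_conv) hC_conv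
    (axes_le_mul_of_tendsto_of_lipschitzOnWith hL₂ (by simp [Phik2_zero hp2_sum]) hD_conv) hD_conv
end
end
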